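/- arXiv:1202.4327 — 2 statements merged into one kernel-verified Lean document; each statement's English description precedes it below -/
import Mathlib

section
/- Let u be the normalized Airy function. The set of zeros of the function h ↦ u'(-h) on (0,∞) is infinite and discrete; let 0 < δ'₁ < δ'₂ < ... be its increasing enumeration, so δ'ₖ → ∞. Then u'(z) ≠ 0 for all z ≥ 0, the series below converges absolutely, and for every z ≥ 0: u''(z)/u'(z) = -∑_{k=1}^∞ (1/δ'ₖ)·(z/(δ'ₖ + z)). -/
open Real MeasureTheory Set Filter Topology

noncomputable section

/-!
The solution `u` extends to an entire function `U` that decays along the positive real axis, and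
the translates `U (· + z)` lie in `L²(0, ∞)`. Integrating the Wronskian of two translates expresses
their inner product through `U` and `U'` at the base points. Hence the translates at the zeros
`-δ k` of `U'` are orthogonal, and `Im (2 U / U') z` equals `4 Im z ‖U (· + z)‖² / |U' z|²`.
Bessel's inequality for these orthogonal vectors says that the imaginary part of `2 U / U'` minus
its Mittag-Leffler sum, which is an entire function, has the sign of `Im z`. Such an entire function
is affine. Since `2 u / u' → 0` at `+∞`, the affine part and the normalizing constants of the
Mittag-Leffler sum cancel, leaving `-2 u x / u' x = ∑ 1 / (δ k (δ k + x))`; multiplying by `x` gives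
the claim because `u'' = 2 x u`. There are infinitely many zeros because `m = 2 u / u'` satisfies
the Riccati equation `m' = 2 - x m ^ 2`, which is impossible for a finite sum of this form.
-/

/-! ### Power series, derivatives and Bessel's inequality -/

section PowerSeries

variable {𝕜 : Type*} [RCLike 𝕜] {c : ℕ → 𝕜}

lemma radius_ofScalars_eq_top (hc : ∀ z : 𝕜, Summable fun n => c n * z ^ n) :
    (FormalMultilinearSeries.ofScalars 𝕜 c).radius = ⊤ := by
  refine ENNReal.eq_top_of_forall_nnreal_le fun r => ?_
  refine FormalMultilinearSeries.le_radius_of_tendsto (l := 0) _ ?_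
  simpa using (hc (r : ℝ)).tendsto_atTop_zero.norm

lemma hasFPowerSeriesOnBall_tsum_mul_pow (hc : ∀ z : 𝕜, Summable fun n => c n * z ^ n) :
    HasFPowerSeriesOnBall (fun z => ∑' n, c n * z ^ n)
      (FormalMultilinearSeries.ofScalars 𝕜 c) 0 ⊤ := by
  have hradius := radius_ofScalars_eq_top hc
  have hsum : (fun z => ∑' n, c n * z ^ n) = (FormalMultilinearSeries.ofScalars 𝕜 c).sum := by
    funext z
    simp [FormalMultilinearSeries.sum, mul_comm]
  rw [hsum, ← hradius]
  exact FormalMultilinearSeries.hasFPowerSeriesOnBall _ (by simp [hradius])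

lemma differentiable_tsum_mul_pow (hc : ∀ z : 𝕜, Summable fun n => c n * z ^ n) :
    Differentiable 𝕜 fun z => ∑' n, c n * z ^ n := fun z =>
  ((hasFPowerSeriesOnBall_tsum_mul_pow hc).analyticAt_of_mem (by simp)).differentiableAt

lemma hasSum_deriv_tsum_mul_pow (hc : ∀ z : 𝕜, Summable fun n => c n * z ^ n) (z : 𝕜) :
    HasSum (fun n : ℕ => (n + 1) * c (n + 1) * z ^ n) (deriv (fun z => ∑' n, c n * z ^ n) z) := by
  have hfderiv := (hasFPowerSeriesOnBall_tsum_mul_pow hc).fderiv.hasSum (y := z) (by simp)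
  convert! hfderiv.mapL (ContinuousLinearMap.apply 𝕜 𝕜 1) using 1
  · funext n
    simp [mul_comm]
  · simp

end PowerSeries

lemma tendsto_zero_of_hasDerivAt_of_monotoneOn {f f' : ℝ → ℝ} {a l : ℝ}
    (hf : ∀ x, HasDerivAt f (f' x) x) (hmono : MonotoneOn f' (Ici a))
    (hlim : Tendsto f atTop (𝓝 l)) : Tendsto f' atTop (𝓝 0) := by
  have hcont : Continuous f := continuous_iff_continuousAt.2 fun x => (hf x).continuousAt
  have hstep (b : ℝ) : Tendsto (fun x => f (x + b)) atTop (𝓝 l) :=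
    hlim.comp (tendsto_atTop_add_const_right _ b tendsto_id)
  refine tendsto_of_tendsto_of_tendsto_of_le_of_le' (g := fun x => f x - f (x + -1))
    (h := fun x => f (x + 1) - f x) (by simpa using hlim.sub (hstep (-1)))
    (by simpa using (hstep 1).sub hlim) ?_ ?_
  all_goals
    filter_upwards [eventually_ge_atTop (a + 1)] with x hx
  · obtain ⟨y, hy, hy'⟩ := exists_hasDerivAt_eq_slope f f' (by linarith : x + -1 < x)
      hcont.continuousOn fun y _ => hf y
    calc f x - f (x + -1) = f' y := by rw [hy']; simp
      _ ≤ f' x := hmono (mem_Ici.2 (by linarith [hy.1])) (mem_Ici.2 (by linarith)) hy.2.le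
  · obtain ⟨y, hy, hy'⟩ := exists_hasDerivAt_eq_slope f f' (by linarith : x < x + 1)
      hcont.continuousOn fun y _ => hf y
    calc f' x ≤ f' y := hmono (mem_Ici.2 (by linarith)) (mem_Ici.2 (by linarith [hy.1])) hy.1.le
      _ = f (x + 1) - f x := by rw [hy']; simp

lemma integral_Ioi_of_hasDerivAt_of_integrableOn {E : Type*} [NormedAddCommGroup E]
    [NormedSpace ℝ E] [CompleteSpace E] {f f' : ℝ → E} {a : ℝ} (hf : ∀ x, HasDerivAt f (f' x) x)
    (hf' : IntegrableOn f' (Ioi a)) (hint : IntegrableOn f (Ioi a)) :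
    ∫ x in Ioi a, f' x = -f a := by
  have hlim := tendsto_zero_of_hasDerivAt_of_integrableOn_Ioi (fun x _ => hf x) hf' hint
  rw [integral_Ioi_of_hasDerivAt_of_tendsto' (fun x _ => hf x) hf' hlim, zero_sub]

lemma eq_zero_of_tendsto_of_tendsto_deriv {f f' : ℝ → ℝ} {a l c : ℝ}
    (hf : ∀ x, a ≤ x → HasDerivAt f (f' x) x) (hl : Tendsto f atTop (𝓝 l))
    (hc : Tendsto f' atTop (𝓝 c)) : c = 0 := by
  have hmvt (x : ℝ) (hx : a ≤ x) : ∃ y, x ≤ y ∧ f' y = f (x + 1) - f x := by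
    obtain ⟨y, hy, hslope⟩ := exists_hasDerivAt_eq_slope f f' (lt_add_one x)
      (fun t ht => (hf t (hx.trans ht.1)).continuousAt.continuousWithinAt)
      fun t ht => hf t (hx.trans ht.1.le)
    exact ⟨y, hy.1.le, by simpa using hslope⟩
  choose! ξ hξ hslope using hmvt
  have hξ_lim : Tendsto ξ atTop atTop := tendsto_atTop_mono' _
    ((eventually_ge_atTop a).mono hξ) tendsto_id
  have hdiff : Tendsto (fun x => f (x + 1) - f x) atTop (𝓝 0) := by
    simpa using (hl.comp (tendsto_atTop_add_const_right _ 1 tendsto_id)).sub hl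
  exact tendsto_nhds_unique
    ((hc.comp hξ_lim).congr' ((eventually_ge_atTop a).mono hslope)) hdiff

lemma hasDerivAt_comp_ofReal_add {f : ℂ → ℂ} {f' z : ℂ} {t : ℝ} (hf : HasDerivAt f f' (t + z)) :
    HasDerivAt (fun t : ℝ => f (t + z)) f' t :=
  (hf.comp_add_const (t : ℂ) z).comp_ofReal

lemma hasDerivAt_comp_add_ofReal_mul {f : ℂ → ℂ} {f' z w : ℂ} {t : ℝ}
    (hf : HasDerivAt f f' (z + t * w)) :
    HasDerivAt (fun t : ℝ => f (z + t * w)) (f' * w) t := by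
  have hline : HasDerivAt (fun t : ℂ => z + t * w) w t := by
    simpa using ((hasDerivAt_id (t : ℂ)).mul_const w).const_add z
  exact (hf.comp (t : ℂ) hline).comp_ofReal

lemma deriv_ofReal_of_forall_eq {U : ℂ → ℂ} {u : ℝ → ℝ} (hU : Differentiable ℂ U)
    (hu : Differentiable ℝ u) (hext : ∀ x : ℝ, U x = u x) (x : ℝ) : deriv U x = deriv u x := by
  have hU' := (hU x).hasDerivAt.comp_ofReal
  simp only [hext] at hU'
  exact hU'.unique (hu x).hasDerivAt.ofReal_comp

section Bessel

variable {𝕜 E ι : Type*} [RCLike 𝕜] [NormedAddCommGroup E] [InnerProductSpace 𝕜 E] {v : ι → E}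

lemma orthonormal_norm_inv_smul (hv : ∀ k, v k ≠ 0)
    (horth : Pairwise fun j k => inner 𝕜 (v j) (v k) = 0) :
    Orthonormal 𝕜 fun k => ((‖v k‖⁻¹ : ℝ) : 𝕜) • v k :=
  ⟨fun k => by simp [norm_smul, hv k], fun j k hjk => by
    simp [inner_smul_left, inner_smul_right, horth hjk]⟩

lemma norm_inner_norm_inv_smul_sq (v x : E) :
    ‖inner 𝕜 (((‖v‖⁻¹ : ℝ) : 𝕜) • v) x‖ ^ 2 = ‖inner 𝕜 v x‖ ^ 2 / ‖v‖ ^ 2 := by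
  rw [inner_smul_left, norm_mul, RCLike.norm_conj, RCLike.norm_ofReal, mul_pow, sq_abs, inv_pow,
    div_eq_inv_mul]

lemma summable_norm_inner_sq_div (hv : ∀ k, v k ≠ 0)
    (horth : Pairwise fun j k => inner 𝕜 (v j) (v k) = 0) (x : E) :
    Summable fun k => ‖inner 𝕜 (v k) x‖ ^ 2 / ‖v k‖ ^ 2 := by
  simpa only [norm_inner_norm_inv_smul_sq] using
    (orthonormal_norm_inv_smul hv horth).inner_products_summable x

lemma tsum_norm_inner_sq_div_le (hv : ∀ k, v k ≠ 0)
    (horth : Pairwise fun j k => inner 𝕜 (v j) (v k) = 0) (x : E) :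
    ∑' k, ‖inner 𝕜 (v k) x‖ ^ 2 / ‖v k‖ ^ 2 ≤ ‖x‖ ^ 2 := by
  simpa only [norm_inner_norm_inv_smul_sq] using
    (orthonormal_norm_inv_smul hv horth).tsum_inner_products_le x

end Bessel

/-! ### Entire functions whose imaginary part has the sign of `Im z` -/

lemma analyticAt_dslope {f : ℂ → ℂ} {a : ℂ} (hf : AnalyticAt ℂ f a) : AnalyticAt ℂ (dslope f a) a :=
  let ⟨_, hp⟩ := hf
  ⟨_, hp.has_fpower_series_dslope_fslope⟩

lemma exists_analyticAt_div_sub_div_sub_eventuallyEq {f g : ℂ → ℂ} {a : ℂ}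
    (hf : AnalyticAt ℂ f a) (hg : AnalyticAt ℂ g a) (hga : g a = 0) (hg' : deriv g a ≠ 0) :
    ∃ H, AnalyticAt ℂ H a ∧
      (fun z => f z / g z - f a / deriv g a / (z - a)) =ᶠ[𝓝[≠] a] H := by
  have hG : AnalyticAt ℂ (dslope g a) a := analyticAt_dslope hg
  have hGa : dslope g a a ≠ 0 := by rwa [dslope_same]
  refine ⟨dslope (fun z => f z / dslope g a z) a, analyticAt_dslope (hf.div hG hGa), ?_⟩
  filter_upwards [self_mem_nhdsWithin,
    hG.continuousAt.eventually_ne hGa |>.filter_mono nhdsWithin_le_nhds] with z (hza : z ≠ a) hz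
  have hgz : g z = (z - a) * dslope g a z := by
    simpa [hga] using (sub_smul_dslope g a z).symm
  rw [dslope_of_ne _ hza, slope_def_field, dslope_same, hgz]
  have := sub_ne_zero.2 hza
  field_simp

lemma exists_differentiable_eq_of_forall_eventuallyEq {f : ℂ → ℂ}
    (hf : ∀ z, ∃ H, AnalyticAt ℂ H z ∧ f =ᶠ[𝓝[≠] z] H) :
    ∃ g, Differentiable ℂ g ∧ ∀ z, AnalyticAt ℂ f z → g z = f z := by
  have hmer : MeromorphicOn f univ := fun z _ =>
    let ⟨_, hH, hfH⟩ := hf z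
    hH.meromorphicAt.congr hfH.symm
  refine ⟨toMeromorphicNFOn f univ, fun z => ?_, fun z hz => ?_⟩
  · obtain ⟨H, hH, hfH⟩ := hf z
    have hnf := meromorphicNFOn_toMeromorphicNFOn f univ (mem_univ z)
    refine (hnf.meromorphicOrderAt_nonneg_iff_analyticAt.1 ?_).differentiableAt
    rw [meromorphicOrderAt_toMeromorphicNFOn hmer (mem_univ z), meromorphicOrderAt_congr hfH]
    exact hH.meromorphicOrderAt_nonneg
  · rw [toMeromorphicNFOn_eq_toMeromorphicNFAt hmer (mem_univ z),
      toMeromorphicNFAt_eq_self.2 hz.meromorphicNFAt]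

lemma differentiable_dslope {f : ℂ → ℂ} (hf : Differentiable ℂ f) (a : ℂ) :
    Differentiable ℂ (dslope f a) :=
  differentiableOn_univ.1 ((Complex.differentiableOn_dslope univ_mem).2 hf.differentiableOn)

lemma re_nonpos_of_forall_mem_sphere {g : ℂ → ℂ} (hg : Differentiable ℂ g) {r : ℝ} (hr : r ≠ 0)
    (hre : ∀ z ∈ Metric.sphere (0 : ℂ) r, (g z).re ≤ 0) {z : ℂ} (hz : z ∈ Metric.ball 0 r) :
    (g z).re ≤ 0 := by
  have hexp : ‖Complex.exp (g z)‖ ≤ 1 :=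
    Complex.norm_le_of_forall_mem_frontier_norm_le Metric.isBounded_ball
      hg.cexp.diffContOnCl
      (fun w hw => by
        rw [frontier_ball _ hr] at hw
        simpa [Complex.norm_exp] using hre w hw)
      (subset_closure hz)
  simpa [Complex.norm_exp] using hexp

lemma im_apply_zero_of_forall_im_mul_im_nonneg {f : ℂ → ℂ} (hf : Continuous f)
    (him : ∀ z, 0 ≤ (f z).im * z.im) : (f 0).im = 0 := by
  have hlim : Tendsto (fun t : ℝ => (f (t * Complex.I)).im) (𝓝 0) (𝓝 (f 0).im) :=
    Continuous.tendsto' (by fun_prop) _ _ (by simp)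
  have hsign (t : ℝ) : 0 ≤ (f (t * Complex.I)).im * t := by simpa using him (t * Complex.I)
  have hleft := hlim.mono_left (nhdsWithin_le_nhds (s := Iio 0))
  have hright := hlim.mono_left (nhdsWithin_le_nhds (s := Ioi 0))
  refine le_antisymm (le_of_tendsto hleft ?_) (ge_of_tendsto hright ?_)
  · filter_upwards [self_mem_nhdsWithin] with t ht using nonpos_of_mul_nonneg_left (hsign t) ht
  · filter_upwards [self_mem_nhdsWithin] with t ht using nonneg_of_mul_nonneg_left (hsign t) ht

lemma norm_le_of_forall_re_mul_sq_sub_sq_nonpos {p : ℂ → ℂ} (hp : Differentiable ℂ p) {r : ℝ}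
    (hr : 0 < r) (hre : ∀ w ∈ Metric.sphere (0 : ℂ) r, (p w * (w ^ 2 - r ^ 2)).re ≤ 0) {z : ℂ}
    (hz : ‖z‖ ≤ r / 2) : ‖p z‖ ≤ 4 / 3 * (2 + 3 * ‖p 0‖) := by
  have hg : Differentiable ℂ fun w => p w * (w ^ 2 - r ^ 2) := by fun_prop
  have hbc := Complex.borelCaratheodory (M := r ^ 2) (by positivity) hg.differentiableOn
    (fun w hw => (re_nonpos_of_forall_mem_sphere hg hr.ne' hre hw).trans (by positivity)) hr
    (mem_ball_zero_iff.2 (by linarith) : z ∈ Metric.ball 0 r)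
  have hupper : ‖p z‖ * ‖z ^ 2 - (r : ℂ) ^ 2‖ ≤ r ^ 2 * (2 + 3 * ‖p 0‖) := by
    have hzr : r / 2 ≤ r - ‖z‖ := by linarith
    calc ‖p z‖ * ‖z ^ 2 - (r : ℂ) ^ 2‖ = ‖p z * (z ^ 2 - r ^ 2)‖ := (norm_mul _ _).symm
      _ ≤ 2 * r ^ 2 * (r / 2) / (r / 2) + ‖p 0 * (0 ^ 2 - r ^ 2)‖ * (r + r / 2) / (r / 2) :=
        hbc.trans (by gcongr)
      _ = r ^ 2 * (2 + 3 * ‖p 0‖) := by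
        have : ‖(0 ^ 2 - r ^ 2 : ℂ)‖ = r ^ 2 := by simp
        rw [norm_mul, this]
        field_simp
        ring
  have hlower : 3 / 4 * r ^ 2 ≤ ‖z ^ 2 - (r : ℂ) ^ 2‖ := by
    have := norm_sub_norm_le ((r : ℂ) ^ 2) (z ^ 2)
    rw [norm_sub_rev, norm_pow, norm_pow, Complex.norm_of_nonneg hr.le] at this
    nlinarith [norm_nonneg z]
  have := (mul_le_mul_of_nonneg_left hlower (norm_nonneg (p z))).trans hupper
  rw [← mul_le_mul_iff_right₀ (by positivity : 0 < 3 / 4 * r ^ 2)]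
  linarith

-- On `|w| = r` one has `w ^ 2 - r ^ 2 = 2 i w Im w`, which turns the sign condition on `Im f`
-- into one on the real part of an entire function.
lemma re_dslope_mul_sq_sub_sq_nonpos {f : ℂ → ℂ} (hf : Continuous f)
    (him : ∀ z, 0 ≤ (f z).im * z.im) {r : ℝ} {w : ℂ} (hw : ‖w‖ = r) :
    (dslope f 0 w * (w ^ 2 - r ^ 2)).re ≤ 0 := by
  have hslope : w * dslope f 0 w = f w - f 0 := by simpa using sub_smul_dslope f 0 w
  have hconj : w - (starRingEnd ℂ) w = 2 * w.im * Complex.I :=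
    (Complex.sub_conj w).trans (by push_cast; rfl)
  have hsq : w * (starRingEnd ℂ) w = r ^ 2 := by rw [Complex.mul_conj', hw]
  have hprod : dslope f 0 w * (w ^ 2 - r ^ 2) = (f w - f 0) * (2 * w.im * Complex.I) := by
    rw [← hslope, ← hsq]
    linear_combination w * dslope f 0 w * hconj
  have hre : (dslope f 0 w * (w ^ 2 - r ^ 2)).re = -2 * ((f w).im * w.im) := by
    rw [hprod]
    simp only [Complex.mul_re, Complex.mul_im, Complex.sub_re, Complex.sub_im, Complex.ofReal_re,
      Complex.ofReal_im, Complex.re_ofNat, Complex.im_ofNat, Complex.I_re, Complex.I_im,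
      im_apply_zero_of_forall_im_mul_im_nonneg hf him]
    ring
  linarith [him w]

lemma norm_dslope_le_of_forall_im_mul_im_nonneg {f : ℂ → ℂ} (hf : Differentiable ℂ f)
    (him : ∀ z, 0 ≤ (f z).im * z.im) (z : ℂ) :
    ‖dslope f 0 z‖ ≤ 4 / 3 * (2 + 3 * ‖dslope f 0 0‖) :=
  norm_le_of_forall_re_mul_sq_sub_sq_nonpos (r := 2 * ‖z‖ + 1) (differentiable_dslope hf 0)
    (by positivity)
    (fun _ hw => re_dslope_mul_sq_sub_sq_nonpos hf.continuous him (mem_sphere_zero_iff_norm.1 hw))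
    (by linarith)

lemma apply_eq_add_mul_of_forall_im_mul_im_nonneg {f : ℂ → ℂ} (hf : Differentiable ℂ f)
    (him : ∀ z, 0 ≤ (f z).im * z.im) (z : ℂ) : f z = f 0 + deriv f 0 * z := by
  have hbdd : Bornology.IsBounded (range (dslope f 0)) :=
    isBounded_iff_forall_norm_le.2
      ⟨_, forall_mem_range.2 (norm_dslope_le_of_forall_im_mul_im_nonneg hf him)⟩
  have hconst : dslope f 0 z = deriv f 0 :=
    dslope_same f (0 : ℂ) ▸ Differentiable.apply_eq_apply_of_bounded
      (differentiable_dslope hf 0) hbdd z 0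
  have := sub_smul_dslope f 0 z
  rw [hconst, sub_zero, smul_eq_mul] at this
  linear_combination -this

/-! ### Mittag-Leffler sums -/

section PolarTerm

/-- The Mittag-Leffler term `1 / d ^ 2 - 1 / (d * (d + z))` with its pole at `-d`, normalized to
vanish at `0`. -/
def polarTerm (d : ℝ) (z : ℂ) : ℂ := z / (d + z) / d ^ 2

lemma analyticAt_polarTerm {d : ℝ} {z : ℂ} (hz : d + z ≠ 0) : AnalyticAt ℂ (polarTerm d) z :=
  (analyticAt_id.div (analyticAt_const.add analyticAt_id) hz).div_const

lemma im_polarTerm (d : ℝ) (z : ℂ) : (polarTerm d z).im = z.im * (1 / (d * ‖d + z‖ ^ 2)) := by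
  have hcast : polarTerm d z = z / (d + z) / ((d ^ 2 : ℝ) : ℂ) := by simp [polarTerm]
  rw [hcast, Complex.div_ofReal_im, Complex.div_im, ← Complex.normSq_eq_norm_sq]
  simp only [Complex.add_re, Complex.add_im, Complex.ofReal_re, Complex.ofReal_im]
  rcases eq_or_ne d 0 with rfl | hd
  · simp
  · field_simp
    ring

lemma ofReal_polarTerm (d x : ℝ) : polarTerm d x = (x / (d + x) / d ^ 2 : ℝ) := by
  simp [polarTerm]

lemma norm_polarTerm_le {d R : ℝ} (hR : 0 < R) (hd : 2 * R ≤ d) {z : ℂ} (hz : ‖z‖ ≤ R) :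
    ‖polarTerm d z‖ ≤ 2 * R * (1 / d ^ 3) := by
  have hdpos : 0 < d := by linarith
  have hdz : d / 2 ≤ ‖d + z‖ := by
    have := norm_sub_norm_le (d : ℂ) (-z)
    rw [norm_neg, sub_neg_eq_add, Complex.norm_of_nonneg hdpos.le] at this
    linarith
  calc ‖polarTerm d z‖ = ‖z‖ / ‖d + z‖ / d ^ 2 := by
        rw [polarTerm, norm_div, norm_div, norm_pow, Complex.norm_of_nonneg hdpos.le]
    _ ≤ R / (d / 2) / d ^ 2 := by gcongr
    _ = 2 * R * (1 / d ^ 3) := by field_simp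

variable {ι : Type*} {δ : ι → ℝ}

lemma tendsto_cofinite_atTop_of_summable_one_div_pow {n : ℕ} (hpos : ∀ k, 0 < δ k)
    (hsum : Summable fun k => 1 / δ k ^ n) : Tendsto δ cofinite atTop := by
  have hzero := hsum.tendsto_cofinite_zero
  refine tendsto_atTop.2 fun b => ?_
  filter_upwards [hzero.eventually_lt_const (show 0 < 1 / max b 1 ^ n by positivity)] with k hk
  exact (le_max_left b 1).trans
    (lt_of_pow_lt_pow_left₀ n (hpos k).le
      (lt_of_one_div_lt_one_div (by have := hpos k; positivity) hk)).le

lemma summable_polarTerm (hpos : ∀ k, 0 < δ k) (hsum : Summable fun k => 1 / δ k ^ 3) (z : ℂ) :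
    Summable fun k => polarTerm (δ k) z := by
  refine (hsum.mul_left (2 * (‖z‖ + 1))).of_norm_bounded_eventually ?_
  have hδ := tendsto_cofinite_atTop_of_summable_one_div_pow hpos hsum
  filter_upwards [hδ.eventually_ge_atTop (2 * (‖z‖ + 1))] with k hk
  exact norm_polarTerm_le (by positivity) hk (by linarith)

lemma analyticAt_tsum_polarTerm_of_forall_le (hsum : Summable fun k => 1 / δ k ^ 3) {R : ℝ}
    (hle : ∀ k, 2 * R ≤ δ k) {z : ℂ} (hz : ‖z‖ < R) :
    AnalyticAt ℂ (fun z => ∑' k, polarTerm (δ k) z) z := by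
  have hR : 0 < R := (norm_nonneg z).trans_lt hz
  refine (Complex.differentiableOn_tsum_of_summable_norm (hsum.mul_left (2 * R)) (fun k w hw => ?_)
    Metric.isOpen_ball fun k w hw => ?_).analyticAt
    (Metric.isOpen_ball.mem_nhds (mem_ball_zero_iff.2 hz))
  · refine (analyticAt_polarTerm fun h => ?_).differentiableAt.differentiableWithinAt
    have := congrArg norm (eq_neg_of_add_eq_zero_left h)
    rw [norm_neg, Complex.norm_of_nonneg (by linarith [hle k])] at this
    linarith [hle k, mem_ball_zero_iff.1 hw]
  · exact norm_polarTerm_le hR (hle k) (mem_ball_zero_iff.1 hw).le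

lemma analyticAt_tsum_polarTerm (hpos : ∀ k, 0 < δ k) (hsum : Summable fun k => 1 / δ k ^ 3)
    {z : ℂ} (hz : ∀ k, δ k + z ≠ 0) : AnalyticAt ℂ (fun z => ∑' k, polarTerm (δ k) z) z := by
  have hfin : {k | ¬ 2 * (‖z‖ + 1) ≤ δ k}.Finite :=
    (tendsto_cofinite_atTop_of_summable_one_div_pow hpos hsum).eventually_ge_atTop (2 * (‖z‖ + 1))
  have hsplit (w : ℂ) : ∑' k, polarTerm (δ k) w = ∑ k ∈ hfin.toFinset, polarTerm (δ k) w +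
      ∑' k : {k // k ∉ hfin.toFinset}, polarTerm (δ k) w :=
    ((summable_polarTerm hpos hsum w).sum_add_tsum_subtype_compl hfin.toFinset).symm
  simp only [hsplit]
  refine (Finset.analyticAt_fun_sum _ fun k _ => analyticAt_polarTerm (hz k)).add
    (analyticAt_tsum_polarTerm_of_forall_le (δ := fun k : {k // k ∉ hfin.toFinset} => δ k)
      (R := ‖z‖ + 1) (hsum.subtype _) (fun k => ?_) (lt_add_one _))
  simpa using k.2

lemma exists_analyticAt_tsum_polarTerm_eq_add (hpos : ∀ k, 0 < δ k)
    (hinj : Function.Injective δ) (hsum : Summable fun k => 1 / δ k ^ 3) (j : ι) :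
    ∃ H : ℂ → ℂ, AnalyticAt ℂ H (-δ j) ∧
      ∀ z, ∑' k, polarTerm (δ k) z = polarTerm (δ j) z + H z := by
  classical
  refine ⟨fun z => ∑' k : {k // k ∉ ({j} : Finset ι)}, polarTerm (δ k) z,
    analyticAt_tsum_polarTerm (δ := fun k : {k // k ∉ ({j} : Finset ι)} => δ k)
      (fun k => hpos k) (hsum.subtype _) fun k => ?_, fun z => ?_⟩
  · have : δ k - δ j ≠ 0 := sub_ne_zero.2 (hinj.ne (by simpa using k.2))
    exact_mod_cast this
  · simpa using ((summable_polarTerm hpos hsum z).sum_add_tsum_subtype_compl {j}).symm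

end PolarTerm

section RealSeries

variable {ι : Type*} {δ : ι → ℝ}

lemma div_add_div_sq_le {d x y : ℝ} (hd : 0 < d) (hx : 0 ≤ x) (hy : 0 ≤ y) :
    y / (d + x) / d ^ 2 ≤ y * (1 / d ^ 3) := by
  rw [div_div, mul_one_div, pow_succ' d 2]
  gcongr
  linarith

lemma tendsto_div_add_atTop (d : ℝ) : Tendsto (fun x : ℝ => x / (d + x)) atTop (𝓝 1) := by
  have hlim : Tendsto (fun x : ℝ => 1 - d / (d + x)) atTop (𝓝 1) := by
    simpa using (tendsto_const_nhds (x := d)).div_atTop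
      (tendsto_atTop_add_const_left _ d tendsto_id) |>.const_sub 1
  refine hlim.congr' ?_
  filter_upwards [eventually_gt_atTop (-d)] with x hx
  have : d + x ≠ 0 := by linarith
  field_simp
  ring

lemma tendsto_tsum_one_div_add_div_sq (hpos : ∀ k, 0 < δ k)
    (hsum : Summable fun k => 1 / δ k ^ 3) :
    Tendsto (fun x => ∑' k, 1 / (δ k + x) / δ k ^ 2) atTop (𝓝 0) := by
  have hterm (k : ι) : Tendsto (fun x => 1 / (δ k + x) / δ k ^ 2) atTop (𝓝 0) := by
    simpa using ((tendsto_const_nhds (x := (1 : ℝ))).div_atTop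
      (tendsto_atTop_add_const_left _ (δ k) tendsto_id)).div_const (δ k ^ 2)
  rw [← tsum_zero (L := .unconditional ι)]
  refine tendsto_tsum_of_dominated_convergence hsum hterm ?_
  filter_upwards [eventually_ge_atTop 0] with x hx k
  have := hpos k
  rw [Real.norm_of_nonneg (by positivity), ← one_mul (1 / δ k ^ 3)]
  exact div_add_div_sq_le this hx zero_le_one

lemma tendsto_tsum_div_add_div_sq (hpos : ∀ k, 0 < δ k) (hsum : Summable fun k => 1 / δ k ^ 2) :
    Tendsto (fun x => ∑' k, x / (δ k + x) / δ k ^ 2) atTop (𝓝 (∑' k, 1 / δ k ^ 2)) := by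
  refine tendsto_tsum_of_dominated_convergence hsum
    (fun k => (tendsto_div_add_atTop (δ k)).div_const _) ?_
  filter_upwards [eventually_ge_atTop 0] with x hx k
  have := hpos k
  rw [Real.norm_of_nonneg (by positivity)]
  gcongr
  exact div_le_one_of_le₀ (by linarith) (by positivity)

variable {m : ℝ → ℝ} {a c : ℝ}

lemma slope_eq_zero_of_affine_add_tsum_tendsto_zero (hpos : ∀ k, 0 < δ k)
    (hsum : Summable fun k => 1 / δ k ^ 3)
    (hm : ∀ x, 0 ≤ x → m x = a + c * x + ∑' k, x / (δ k + x) / δ k ^ 2)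
    (hlim : Tendsto m atTop (𝓝 0)) : c = 0 := by
  have hquot : Tendsto (fun x => m x / x) atTop (𝓝 0) := hlim.div_atTop tendsto_id
  have hquot' : Tendsto (fun x => a / x + c + ∑' k, 1 / (δ k + x) / δ k ^ 2) atTop (𝓝 c) := by
    simpa using ((tendsto_const_nhds (x := a)).div_atTop tendsto_id).add_const c |>.add
      (tendsto_tsum_one_div_add_div_sq hpos hsum)
  refine tendsto_nhds_unique (hquot'.congr' ?_) hquot
  filter_upwards [eventually_gt_atTop 0] with x hx
  rw [hm x hx.le, add_div, add_div, mul_div_cancel_right₀ _ hx.ne', ← tsum_div_const]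
  congr! 2 with k
  field_simp

lemma summable_one_div_sq_of_tendsto_zero (hpos : ∀ k, 0 < δ k)
    (hsum : Summable fun k => 1 / δ k ^ 3)
    (hm : ∀ x, 0 ≤ x → m x = a + ∑' k, x / (δ k + x) / δ k ^ 2)
    (hlim : Tendsto m atTop (𝓝 0)) : Summable fun k => 1 / δ k ^ 2 := by
  refine summable_of_sum_le (c := 0 - a) (fun k => by positivity) fun s => ?_
  refine le_of_tendsto_of_tendsto
    (tendsto_finsetSum s fun k _ => (tendsto_div_add_atTop (δ k)).div_const (δ k ^ 2))
    (hlim.sub_const a) ?_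
  filter_upwards [eventually_ge_atTop 0] with x hx
  have hnonneg (k : ι) : 0 ≤ x / (δ k + x) / δ k ^ 2 := by have := hpos k; positivity
  have hsummable : Summable fun k => x / (δ k + x) / δ k ^ 2 :=
    .of_nonneg_of_le hnonneg (fun k => div_add_div_sq_le (hpos k) hx hx) (hsum.mul_left x)
  rw [hm x hx, add_sub_cancel_left]
  exact hsummable.sum_le_tsum s fun k _ => hnonneg k

lemma hasSum_one_div_mul_add_of_tendsto_zero (hpos : ∀ k, 0 < δ k)
    (hsum : Summable fun k => 1 / δ k ^ 3)
    (hm : ∀ x, 0 ≤ x → m x = a + c * x + ∑' k, x / (δ k + x) / δ k ^ 2)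
    (hlim : Tendsto m atTop (𝓝 0)) {x : ℝ} (hx : 0 ≤ x) :
    HasSum (fun k => 1 / (δ k * (δ k + x))) (-m x) := by
  obtain rfl : c = 0 := slope_eq_zero_of_affine_add_tsum_tendsto_zero hpos hsum hm hlim
  simp only [zero_mul, add_zero] at hm
  have hsq := summable_one_div_sq_of_tendsto_zero hpos hsum hm hlim
  have ha : a + ∑' k, 1 / δ k ^ 2 = 0 := by
    refine tendsto_nhds_unique (((tendsto_tsum_div_add_div_sq hpos hsq).const_add a).congr' ?_) hlim
    filter_upwards [eventually_ge_atTop 0] with y hy using (hm y hy).symm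
  have hterm (k : ι) : x / (δ k + x) / δ k ^ 2 = 1 / δ k ^ 2 - 1 / (δ k * (δ k + x)) := by
    have := hpos k
    field_simp
    ring
  have hsummable : Summable fun k => 1 / (δ k * (δ k + x)) := by
    refine .of_nonneg_of_le (fun k => ?_) (fun k => ?_) hsq
    all_goals have := hpos k
    · positivity
    · rw [sq]
      gcongr
      linarith
  have htsum : ∑' k, 1 / (δ k * (δ k + x)) = -m x := by
    rw [hm x hx]
    simp only [hterm, hsq.tsum_sub hsummable]
    linarith
  exact htsum ▸ hsummable.hasSum

end RealSeries

-- If there were finitely many terms, `x * m x` would converge, so `m'` would tend to `2`.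
lemma infinite_of_hasSum_of_hasDerivAt {ι : Type*} {δ : ι → ℝ} {m : ℝ → ℝ}
    (hsum : ∀ x, 0 ≤ x → HasSum (fun k => 1 / (δ k * (δ k + x))) (-m x))
    (hm : ∀ x, 0 ≤ x → HasDerivAt m (2 - x * m x ^ 2) x) (hlim : Tendsto m atTop (𝓝 0)) :
    Infinite ι := by
  by_contra hfin
  rw [not_infinite_iff_finite] at hfin
  cases nonempty_fintype ι
  have hxm : Tendsto (fun x => x * m x) atTop (𝓝 (-∑ k, 1 / δ k * 1)) := by
    refine (tendsto_finsetSum _ fun k _ =>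
      (tendsto_div_add_atTop (δ k)).const_mul (1 / δ k)).neg.congr' ?_
    filter_upwards [eventually_ge_atTop 0] with x hx
    have hmx : m x = -∑ k, 1 / (δ k * (δ k + x)) := by
      rw [← (hsum x hx).unique (hasSum_fintype _), neg_neg]
    rw [hmx, mul_neg, Finset.mul_sum]
    congr! 2 with k
    rw [div_mul_div_comm, one_mul, mul_one_div]
  have hderiv : Tendsto (fun x => 2 - x * m x ^ 2) atTop (𝓝 2) := by
    simpa [sq, mul_assoc] using (hxm.mul hlim).const_sub 2
  exact two_ne_zero (eq_zero_of_tendsto_of_tendsto_deriv hm hlim hderiv)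

/-! ### The Airy equation -/

/-- The Taylor coefficients at `0` of the solution of `U'' = 2 z U` with `U 0 = a`, `U' 0 = b`, over
an arbitrary field so that the real and the complex solution can be compared. -/
def airyCoeff {K : Type*} [Field K] (a b : K) : ℕ → K
  | 0 => a
  | 1 => b
  | 2 => 0
  | n + 3 => 2 * airyCoeff a b n / ((n + 3) * (n + 2))

lemma map_airyCoeff {K L : Type*} [Field K] [Field L] (φ : K →+* L) (a b : K) (n : ℕ) :
    φ (airyCoeff a b n) = airyCoeff (φ a) (φ b) n := by
  induction n using airyCoeff.induct with
  | case1 | case2 | case3 => simp [airyCoeff]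
  | case4 n ih => simp only [airyCoeff, map_div₀, map_mul, map_add, map_natCast, map_ofNat, ih]

section AiryEquation

variable {𝕜 : Type*} [RCLike 𝕜]

lemma exists_forall_norm_airyCoeff_mul_pow_le (a b : 𝕜) {r : ℝ} (hr : 0 < r) :
    ∃ M, ∀ n, ‖airyCoeff a b n‖ * r ^ n ≤ M := by
  obtain ⟨N, hN⟩ := exists_nat_gt (2 * r ^ 3)
  refine ⟨∑ i ∈ Finset.range (N + 3), ‖airyCoeff a b i‖ * r ^ i, fun n => ?_⟩
  induction n using Nat.strong_induction_on with
  | _ n ih =>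
    obtain hn | hn := lt_or_ge n (N + 3)
    · exact Finset.single_le_sum (f := fun i => ‖airyCoeff a b i‖ * r ^ i)
        (fun i _ => by positivity) (Finset.mem_range.2 hn)
    · obtain ⟨m, rfl⟩ : ∃ m, n = m + 3 := ⟨n - 3, by omega⟩
      have hm : (N : ℝ) ≤ m := by exact_mod_cast (by omega : N ≤ m)
      have hratio : 2 * r ^ 3 / ((m + 3) * (m + 2)) ≤ 1 := by
        rw [div_le_one (by positivity)]
        nlinarith [(Nat.cast_nonneg m : (0 : ℝ) ≤ m)]
      have hnorm : ‖((m : 𝕜) + 3) * (m + 2)‖ = (m + 3) * (m + 2) := by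
        exact_mod_cast RCLike.norm_natCast (K := 𝕜) ((m + 3) * (m + 2))
      calc ‖airyCoeff a b (m + 3)‖ * r ^ (m + 3)
          = 2 * r ^ 3 / ((m + 3) * (m + 2)) * (‖airyCoeff a b m‖ * r ^ m) := by
            rw [airyCoeff, norm_div, norm_mul, hnorm, RCLike.norm_ofNat]; ring
        _ ≤ 1 * (‖airyCoeff a b m‖ * r ^ m) := by gcongr
        _ ≤ _ := by rw [one_mul]; exact ih m (by omega)

lemma summable_airyCoeff_mul_pow (a b z : 𝕜) : Summable fun n => airyCoeff a b n * z ^ n := by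
  obtain ⟨M, hM⟩ :=
    exists_forall_norm_airyCoeff_mul_pow_le a b (by positivity : 0 < 2 * (‖z‖ + 1))
  refine .of_norm_bounded (summable_geometric_two.mul_left M) fun n => ?_
  rw [norm_mul, norm_pow, one_div, inv_pow, ← div_eq_mul_inv, le_div_iff₀ (by positivity)]
  calc ‖airyCoeff a b n‖ * ‖z‖ ^ n * 2 ^ n = ‖airyCoeff a b n‖ * (2 * ‖z‖) ^ n := by ring
    _ ≤ ‖airyCoeff a b n‖ * (2 * (‖z‖ + 1)) ^ n := by
        gcongr
        exact le_add_of_nonneg_right zero_le_one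
    _ ≤ M := hM n

/-- `U` solves the Airy equation in the scaling `U'' = 2 z U` on the whole line or plane. -/
structure IsAirySolution (U : 𝕜 → 𝕜) : Prop where
  differentiable : Differentiable 𝕜 U
  hasDerivAt_deriv : ∀ z, HasDerivAt (deriv U) (2 * z * U z) z

/-- The solution of the Airy equation with `U 0 = a` and `U' 0 = b`, by which a real solution is
continued to an entire one. -/
def airySolution (a b z : 𝕜) : 𝕜 := ∑' n, airyCoeff a b n * z ^ n

lemma hasSum_deriv_airySolution (a b z : 𝕜) :
    HasSum (fun n : ℕ => (n + 1) * airyCoeff a b (n + 1) * z ^ n) (deriv (airySolution a b) z) :=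
  hasSum_deriv_tsum_mul_pow (summable_airyCoeff_mul_pow a b) z

lemma airySolution_zero (a b : 𝕜) : airySolution a b 0 = a := by
  rw [airySolution, tsum_eq_single 0 fun n hn => by simp [hn]]
  simp [airyCoeff]

lemma deriv_airySolution_zero (a b : 𝕜) : deriv (airySolution a b) 0 = b := by
  rw [← (hasSum_deriv_airySolution a b 0).tsum_eq, tsum_eq_single 0 fun n hn => by simp [hn]]
  simp [airyCoeff]

lemma isAirySolution_airySolution (a b : 𝕜) : IsAirySolution (airySolution a b) where
  differentiable := differentiable_tsum_mul_pow (summable_airyCoeff_mul_pow a b)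
  hasDerivAt_deriv z := by
    have hc (z : 𝕜) : Summable fun n : ℕ => (n + 1) * airyCoeff a b (n + 1) * z ^ n :=
      (hasSum_deriv_airySolution a b z).summable
    have hderiv : deriv (airySolution a b) =
        fun z => ∑' n : ℕ, (n + 1) * airyCoeff a b (n + 1) * z ^ n :=
      funext fun z => (hasSum_deriv_airySolution a b z).tsum_eq.symm
    have hsum := hasSum_deriv_tsum_mul_pow hc z
    rw [hderiv]
    refine (differentiable_tsum_mul_pow hc z).hasDerivAt.congr_deriv ?_
    rw [← hsum.tsum_eq, hsum.summable.tsum_eq_zero_add, airySolution, ← tsum_mul_left]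
    simp only [airyCoeff, Nat.cast_add, Nat.cast_one, mul_zero, zero_mul, zero_add]
    congr! 2 with n
    have h₃ : (n : 𝕜) + 3 ≠ 0 := by exact_mod_cast (n + 2).succ_ne_zero
    have h₂ : (n : 𝕜) + 2 ≠ 0 := by exact_mod_cast (n + 1).succ_ne_zero
    field_simp
    ring

lemma IsAirySolution.wronskian_eq {U W : 𝕜 → 𝕜} (hU : IsAirySolution U) (hW : IsAirySolution W)
    (z : 𝕜) : U z * deriv W z - deriv U z * W z = U 0 * deriv W 0 - deriv U 0 * W 0 := by
  have hconst (y) : HasDerivAt (fun y => U y * deriv W y - deriv U y * W y) 0 y := by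
    refine (((hU.differentiable y).hasDerivAt.mul (hW.hasDerivAt_deriv y)).sub
      ((hU.hasDerivAt_deriv y).mul (hW.differentiable y).hasDerivAt)).congr_deriv ?_
    ring
  exact is_const_of_deriv_eq_zero (fun y => (hconst y).differentiableAt)
    (fun y => (hconst y).deriv) z 0

lemma IsAirySolution.eq_airySolution {U : 𝕜 → 𝕜} (hU : IsAirySolution U) :
    U = airySolution (U 0) (deriv U 0) := by
  funext z
  have hF := isAirySolution_airySolution (1 : 𝕜) 0
  have hG := isAirySolution_airySolution (0 : 𝕜) 1
  have hW := isAirySolution_airySolution (U 0) (deriv U 0)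
  have hFG := hF.wronskian_eq hG z
  have hUF := hU.wronskian_eq hF z
  have hUG := hU.wronskian_eq hG z
  have hWF := hW.wronskian_eq hF z
  have hWG := hW.wronskian_eq hG z
  simp only [airySolution_zero, deriv_airySolution_zero] at hFG hUF hUG hWF hWG
  grind

end AiryEquation

open ComplexConjugate in
lemma airySolution_conj (a b z : ℂ) :
    airySolution (conj a) (conj b) (conj z) = conj (airySolution a b z) := by
  simp only [airySolution, Complex.conj_tsum, map_mul, map_pow, map_airyCoeff]

lemma ofReal_airySolution (a b x : ℝ) :
    ((airySolution a b x : ℝ) : ℂ) = airySolution (a : ℂ) (b : ℂ) (x : ℂ) := by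
  simp only [airySolution, Complex.ofReal_tsum, Complex.ofReal_mul, Complex.ofReal_pow]
  simp only [← Complex.ofRealHom_eq_coe, map_airyCoeff]

lemma IsAirySolution.of_contDiff {u : ℝ → ℝ} (hu : ContDiff ℝ 2 u)
    (hode : ∀ h, deriv (deriv u) h = 2 * h * u h) : IsAirySolution u where
  differentiable := hu.differentiable two_ne_zero
  hasDerivAt_deriv x := by
    have hu' : ContDiff ℝ 1 (deriv u) := ((contDiff_succ_iff_deriv (n := 1)).1 hu).2.2
    exact hode x ▸ (hu'.differentiable one_ne_zero x).hasDerivAt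

/-- A nonzero entire solution of the Airy equation which is real on the real axis and decays along
the positive real axis. -/
structure IsRecessiveAiry (U : ℂ → ℂ) : Prop extends IsAirySolution U where
  map_conj : ∀ z, U (starRingEnd ℂ z) = starRingEnd ℂ (U z)
  tendsto_zero : Tendsto (fun x : ℝ => U x) atTop (𝓝 0)
  ne_zero : U ≠ 0

lemma IsAirySolution.exists_isRecessiveAiry {u : ℝ → ℝ} (hu : IsAirySolution u) (hne : u ≠ 0)
    (hlim : Tendsto u atTop (𝓝 0)) :
    ∃ U : ℂ → ℂ, IsRecessiveAiry U ∧ (∀ x : ℝ, U x = u x) ∧ ∀ x : ℝ, deriv U x = deriv u x := by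
  have hext (x : ℝ) : airySolution (u 0 : ℂ) ((deriv u 0 : ℝ) : ℂ) x = u x := by
    rw [← ofReal_airySolution, ← hu.eq_airySolution]
  have hU := isAirySolution_airySolution (u 0 : ℂ) ((deriv u 0 : ℝ) : ℂ)
  refine ⟨_, ⟨hU, fun z => ?_, ?_, fun h => hne ?_⟩, hext,
    deriv_ofReal_of_forall_eq hU.differentiable hu.differentiable hext⟩
  · rw [← airySolution_conj, Complex.conj_ofReal, Complex.conj_ofReal]
  · simpa only [hext, Complex.ofReal_zero, Function.comp_def] using
      (Complex.continuous_ofReal.tendsto 0).comp hlim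
  · funext x
    exact Complex.ofReal_eq_zero.1 ((hext x).symm.trans (congrFun h x))

/-! ### Recessive solutions -/

/-- The energy of a solution of the Airy equation. On the real axis it is half the second derivative
of `|U|²`, hence integrable at `+∞` for a decaying solution; on vertical lines it obeys a Grönwall
bound, which carries the integrability over to all horizontal lines. -/
def airyEnergy (U : ℂ → ℂ) (z : ℂ) : ℝ := 2 * z.re * ‖U z‖ ^ 2 + ‖deriv U z‖ ^ 2

lemma two_mul_norm_mul_norm_deriv_le_airyEnergy (U : ℂ → ℂ) {z : ℂ} (hz : 1 ≤ 2 * z.re) :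
    2 * (‖U z‖ * ‖deriv U z‖) ≤ airyEnergy U z :=
  calc 2 * (‖U z‖ * ‖deriv U z‖) ≤ 1 * ‖U z‖ ^ 2 + ‖deriv U z‖ ^ 2 := by
        linarith [two_mul_le_add_sq ‖U z‖ ‖deriv U z‖]
    _ ≤ airyEnergy U z := by
        unfold airyEnergy
        gcongr

namespace IsAirySolution

variable {U : ℂ → ℂ} (hU : IsAirySolution U)
include hU

lemma continuous_deriv : Continuous (deriv U) :=
  continuous_iff_continuousAt.2 fun z => (hU.hasDerivAt_deriv z).continuousAt

lemma hasDerivAt_airyEnergy_vertical (x y t : ℝ) :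
    HasDerivAt (fun t : ℝ => airyEnergy U (x + t * (y * Complex.I)))
      (-(4 * t * y ^ 2 * inner ℝ (U (x + t * (y * Complex.I)))
        (deriv U (x + t * (y * Complex.I))))) t := by
  have hUline := hasDerivAt_comp_add_ofReal_mul (w := y * Complex.I)
    (hU.differentiable (x + t * (y * Complex.I))).hasDerivAt
  have hVline := hasDerivAt_comp_add_ofReal_mul (w := y * Complex.I)
    (hU.hasDerivAt_deriv (x + t * (y * Complex.I)))
  have hre (t : ℝ) : ((x : ℂ) + t * (y * Complex.I)).re = x := by simp
  simp only [airyEnergy, hre]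
  refine ((hUline.norm_sq.const_mul (2 * x)).add hVline.norm_sq).congr_deriv ?_
  simp only [Complex.inner, Complex.mul_re, Complex.mul_im, Complex.add_re, Complex.add_im,
    Complex.conj_re, Complex.conj_im, Complex.ofReal_re, Complex.ofReal_im, Complex.I_re,
    Complex.I_im, Complex.re_ofNat, Complex.im_ofNat]
  ring

lemma airyEnergy_le {x : ℝ} (hx : 1 ≤ 2 * x) (y : ℝ) :
    airyEnergy U (x + y * Complex.I) ≤ exp (2 * y ^ 2) * airyEnergy U x := by
  have hbound (t : ℝ) (ht : t ∈ Ico (0 : ℝ) 1) :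
      -(4 * t * y ^ 2 * inner ℝ (U (x + t * (y * Complex.I))) (deriv U (x + t * (y * Complex.I))))
        ≤ 2 * y ^ 2 * airyEnergy U (x + t * (y * Complex.I)) + 0 := by
    set z : ℂ := x + t * (y * Complex.I)
    have hinner := neg_le_of_abs_le (abs_real_inner_le_norm (U z) (deriv U z))
    have hamgm : 2 * (‖U z‖ * ‖deriv U z‖) ≤ airyEnergy U z :=
      two_mul_norm_mul_norm_deriv_le_airyEnergy U (by simpa [z] using hx)
    have hnonneg : 0 ≤ airyEnergy U z := le_trans (by positivity) hamgm
    have ht₀ : 0 ≤ t := ht.1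
    calc -(4 * t * y ^ 2 * inner ℝ (U z) (deriv U z))
        = t * (2 * y ^ 2) * (2 * -inner ℝ (U z) (deriv U z)) := by ring
      _ ≤ t * (2 * y ^ 2) * airyEnergy U z := by gcongr; linarith
      _ ≤ 1 * (2 * y ^ 2) * airyEnergy U z := by gcongr; exact ht.2.le
      _ = 2 * y ^ 2 * airyEnergy U z + 0 := by ring
  have hgronwall := le_gronwallBound_of_liminf_deriv_right_le
    (fun t _ => (hU.hasDerivAt_airyEnergy_vertical x y t).continuousAt.continuousWithinAt)
    (fun t _ r hr =>
      (hU.hasDerivAt_airyEnergy_vertical x y t).hasDerivWithinAt.liminf_right_slope_le hr)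
    le_rfl hbound 1 (right_mem_Icc.2 zero_le_one)
  simpa [gronwallBound_ε0, mul_comm] using hgronwall

end IsAirySolution

namespace IsRecessiveAiry

variable {U : ℂ → ℂ} (hU : IsRecessiveAiry U)
include hU

lemma integrableOn_airyEnergy (a : ℝ) :
    IntegrableOn (fun t : ℝ => airyEnergy U (t + a)) (Ioi (-a)) := by
  have hUline (t : ℝ) := hasDerivAt_comp_ofReal_add (hU.differentiable (t + a)).hasDerivAt
  have hVline (t : ℝ) := hasDerivAt_comp_ofReal_add (hU.hasDerivAt_deriv (t + a))
  have hderiv (t : ℝ) : HasDerivAt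
      (fun t : ℝ => 2 * inner ℝ (U (t + a)) (deriv U (t + a))) (2 * airyEnergy U (t + a)) t := by
    refine (((hUline t).inner ℝ (hVline t)).const_mul 2).congr_deriv ?_
    simp only [airyEnergy, Complex.inner, Complex.sq_norm, Complex.normSq_apply, Complex.mul_re,
      Complex.mul_im, Complex.add_re, Complex.add_im, Complex.conj_re, Complex.conj_im,
      Complex.ofReal_re, Complex.ofReal_im, Complex.re_ofNat, Complex.im_ofNat]
    ring
  have hnonneg (t : ℝ) (ht : -a ≤ t) : 0 ≤ 2 * airyEnergy U (t + a) := by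
    have : 0 ≤ t + a := by linarith
    simp only [airyEnergy, Complex.add_re, Complex.ofReal_re]
    positivity
  have hmono : MonotoneOn (fun t : ℝ => 2 * inner ℝ (U (t + a)) (deriv U (t + a))) (Ici (-a)) := by
    exact monotoneOn_of_hasDerivWithinAt_nonneg (convex_Ici _)
      (fun t _ => (hderiv t).continuousAt.continuousWithinAt)
      (fun t _ => (hderiv t).hasDerivWithinAt) fun t ht => hnonneg t (interior_subset ht)
  have hlim : Tendsto (fun t : ℝ => ‖U (t + a)‖ ^ 2) atTop (𝓝 0) := by
    have := hU.tendsto_zero.comp (tendsto_atTop_add_const_right _ a tendsto_id)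
    simpa using this.norm.pow 2
  have hlim' := tendsto_zero_of_hasDerivAt_of_monotoneOn (fun t => (hUline t).norm_sq) hmono hlim
  have hint := integrableOn_Ioi_deriv_of_nonneg' (fun t _ => hderiv t)
    (fun t ht => hnonneg t (le_of_lt ht)) hlim'
  simpa [IntegrableOn] using hint.const_mul (1 / 2)

lemma integrableOn_weighted (z : ℂ) : IntegrableOn
    (fun t : ℝ => (1 + t) * ‖U (t + z)‖ ^ 2 + ‖deriv U (t + z)‖ ^ 2) (Ioi 0) := by
  have hUcont := hU.differentiable.continuous
  have hVcont := hU.continuous_deriv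
  have hcont : Continuous fun t : ℝ => (1 + t) * ‖U (t + z)‖ ^ 2 + ‖deriv U (t + z)‖ ^ 2 := by
    fun_prop
  refine (LocallyIntegrableOn.integrableOn_of_isBigO_atTop
    (hcont.locallyIntegrable.locallyIntegrableOn _) (.of_bound (exp (2 * z.im ^ 2)) ?_)
    ⟨_, Ioi_mem_atTop _, hU.integrableOn_airyEnergy z.re⟩).mono_set Ioi_subset_Ici_self
  filter_upwards [eventually_ge_atTop (0 : ℝ), eventually_ge_atTop (1 - 2 * z.re)] with t ht₀ ht
  have hsplit : (t : ℂ) + z = ((t + z.re : ℝ) : ℂ) + z.im * Complex.I := by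
    conv_lhs => rw [← Complex.re_add_im z]
    push_cast
    ring
  have henergy := hU.airyEnergy_le (by linarith : 1 ≤ 2 * (t + z.re)) z.im
  rw [Real.norm_of_nonneg (by positivity)]
  calc (1 + t) * ‖U (t + z)‖ ^ 2 + ‖deriv U (t + z)‖ ^ 2 ≤ airyEnergy U (t + z) := by
        simp only [airyEnergy, Complex.add_re, Complex.ofReal_re]
        gcongr
        linarith
    _ ≤ exp (2 * z.im ^ 2) * airyEnergy U ((t + z.re : ℝ) : ℂ) := by rwa [hsplit]
    _ ≤ _ := by
        push_cast
        gcongr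
        exact le_norm_self _

lemma memLp_two (z : ℂ) : MemLp (fun t : ℝ => U (t + z)) 2 (volume.restrict (Ioi 0)) := by
  have hcont := hU.differentiable.continuous
  have hmeas : Continuous fun t : ℝ => U (t + z) := by fun_prop
  rw [memLp_two_iff_integrable_sq_norm hmeas.aestronglyMeasurable]
  refine (hU.integrableOn_weighted z).mono' (by fun_prop) ?_
  filter_upwards [ae_restrict_mem measurableSet_Ioi] with t ht
  have ht₀ : 0 < t := ht
  rw [Real.norm_of_nonneg (by positivity)]
  nlinarith [sq_nonneg ‖U (t + z)‖, sq_nonneg ‖deriv U (t + z)‖]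

lemma memLp_deriv_two (z : ℂ) :
    MemLp (fun t : ℝ => deriv U (t + z)) 2 (volume.restrict (Ioi 0)) := by
  have hcont := hU.continuous_deriv
  have hmeas : Continuous fun t : ℝ => deriv U (t + z) := by fun_prop
  rw [memLp_two_iff_integrable_sq_norm hmeas.aestronglyMeasurable]
  refine (hU.integrableOn_weighted z).mono' (by fun_prop) ?_
  filter_upwards [ae_restrict_mem measurableSet_Ioi] with t ht
  have ht₀ : 0 < t := ht
  rw [Real.norm_of_nonneg (by positivity)]
  exact le_add_of_nonneg_left (by positivity)

lemma integrableOn_mul_sq (z : ℂ) : IntegrableOn (fun t : ℝ => t * U (t + z) ^ 2) (Ioi 0) := by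
  have hcont := hU.differentiable.continuous
  have hmeas : Continuous fun t : ℝ => t * U (t + z) ^ 2 := by fun_prop
  refine (hU.integrableOn_weighted z).mono' hmeas.aestronglyMeasurable ?_
  filter_upwards [ae_restrict_mem measurableSet_Ioi] with t ht
  have ht₀ : 0 < t := ht
  rw [norm_mul, Complex.norm_of_nonneg ht₀.le, norm_pow]
  nlinarith [sq_nonneg ‖U (t + z)‖, sq_nonneg ‖deriv U (t + z)‖]

lemma two_mul_sub_mul_integral_mul (a b : ℂ) :
    2 * (a - b) * ∫ t in Ioi (0 : ℝ), U (t + a) * U (t + b) =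
      U a * deriv U b - deriv U a * U b := by
  have hderiv (t : ℝ) : HasDerivAt
      (fun t : ℝ => deriv U (t + a) * U (t + b) - U (t + a) * deriv U (t + b))
      (2 * (a - b) * (U (t + a) * U (t + b))) t := by
    refine (((hasDerivAt_comp_ofReal_add (hU.hasDerivAt_deriv (t + a))).mul
      (hasDerivAt_comp_ofReal_add (hU.differentiable (t + b)).hasDerivAt)).sub
      ((hasDerivAt_comp_ofReal_add (hU.differentiable (t + a)).hasDerivAt).mul
      (hasDerivAt_comp_ofReal_add (hU.hasDerivAt_deriv (t + b))))).congr_deriv ?_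
    ring
  have hint := integral_Ioi_of_hasDerivAt_of_integrableOn hderiv
    (((hU.memLp_two a).integrable_mul (hU.memLp_two b)).const_mul _)
    (((hU.memLp_deriv_two a).integrable_mul (hU.memLp_two b)).sub
      ((hU.memLp_two a).integrable_mul (hU.memLp_deriv_two b)))
  rw [integral_const_mul] at hint
  simpa using hint

lemma integral_sq (a : ℂ) :
    ∫ t in Ioi (0 : ℝ), U (t + a) ^ 2 = deriv U a ^ 2 / 2 - a * U a ^ 2 := by
  have hderiv (t : ℝ) : HasDerivAt
      (fun t : ℝ => (t + a) * U (t + a) ^ 2 - deriv U (t + a) ^ 2 / 2) (U (t + a) ^ 2) t := by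
    refine (((hasDerivAt_comp_ofReal_add (hasDerivAt_id _)).mul
      ((hasDerivAt_comp_ofReal_add (hU.differentiable (t + a)).hasDerivAt).pow 2)).sub
      (((hasDerivAt_comp_ofReal_add (hU.hasDerivAt_deriv (t + a))).pow 2).div_const
        2)).congr_deriv ?_
    simp only [Pi.pow_apply, one_mul, id_eq, Nat.cast_ofNat, Nat.add_one_sub_one, pow_one]
    ring
  have hUsq : IntegrableOn (fun t : ℝ => U (t + a) ^ 2) (Ioi 0) := by
    simpa only [sq] using! (hU.memLp_two a).integrable_mul (hU.memLp_two a)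
  have hVsq : IntegrableOn (fun t : ℝ => deriv U (t + a) ^ 2) (Ioi 0) := by
    simpa only [sq] using! (hU.memLp_deriv_two a).integrable_mul (hU.memLp_deriv_two a)
  have hboundary : IntegrableOn
      (fun t : ℝ => (t + a) * U (t + a) ^ 2 - deriv U (t + a) ^ 2 / 2) (Ioi 0) := by
    simp only [add_mul]
    exact ((hU.integrableOn_mul_sq a).add (hUsq.const_mul a)).sub (hVsq.div_const 2)
  rw [integral_Ioi_of_hasDerivAt_of_integrableOn hderiv hUsq hboundary]
  simp

/-- The translate `t ↦ U (t + z)` as a vector of `L²(0, ∞)`, to which Bessel's inequality is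
applied: the profiles at distinct zeros of `U'` are orthogonal. -/
def profile (z : ℂ) : Lp ℂ 2 (volume.restrict (Ioi (0 : ℝ))) :=
  (hU.memLp_two z).toLp

lemma inner_profile (w z : ℂ) :
    inner ℂ (hU.profile w) (hU.profile z) =
      ∫ t in Ioi (0 : ℝ), U (t + starRingEnd ℂ w) * U (t + z) := by
  rw [L2.inner_def]
  refine integral_congr_ae ?_
  filter_upwards [(hU.memLp_two w).coeFn_toLp, (hU.memLp_two z).coeFn_toLp] with t hw hz
  simp only [profile, hw, hz, RCLike.inner_apply']
  rw [← hU.map_conj, map_add, Complex.conj_ofReal]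

lemma two_mul_sub_mul_inner_profile (w z : ℂ) :
    2 * (starRingEnd ℂ w - z) * inner ℂ (hU.profile w) (hU.profile z) =
      U (starRingEnd ℂ w) * deriv U z - deriv U (starRingEnd ℂ w) * U z := by
  rw [inner_profile, two_mul_sub_mul_integral_mul hU]

lemma profile_ne_zero (z : ℂ) : hU.profile z ≠ 0 := fun hzero => hU.ne_zero <| by
  have hcont := hU.differentiable.continuous
  have hae : (fun t : ℝ => U (t + z)) =ᵐ[volume.restrict (Ioi 0)] 0 :=
    (hU.memLp_two z).coeFn_toLp.symm.trans (Lp.eq_zero_iff_ae_eq_zero.1 hzero)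
  have hray : EqOn (fun t : ℝ => U (t + z)) 0 (Ioi 0) :=
    Measure.eqOn_open_of_ae_eq hae isOpen_Ioi (by fun_prop) continuousOn_const
  have hfreq : ∃ᶠ w in 𝓝[≠] z, U w = 0 := by
    have hshift : Tendsto (fun t : ℝ => (t : ℂ) + z) (𝓝[>] 0) (𝓝[≠] z) := by
      refine tendsto_nhdsWithin_iff.2 ⟨?_, ?_⟩
      · exact (by fun_prop : Continuous fun t : ℝ => (t : ℂ) + z).tendsto' 0 z (by simp)
          |>.mono_left nhdsWithin_le_nhds
      · filter_upwards [self_mem_nhdsWithin] with t ht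
        simpa using (ne_of_gt ht : t ≠ 0)
    exact hshift.frequently (Eventually.frequently <| by
      filter_upwards [self_mem_nhdsWithin] with t ht using hray ht)
  exact AnalyticOnNhd.eq_of_frequently_eq (fun w _ => hU.differentiable.analyticAt w)
    (fun _ _ => analyticAt_const) hfreq

lemma deriv_conj (z : ℂ) : deriv U (starRingEnd ℂ z) = starRingEnd ℂ (deriv U z) := by
  have hconj : (starRingEnd ℂ ∘ U ∘ starRingEnd ℂ) = U := funext fun z => by simp [hU.map_conj]
  conv_lhs => rw [← hconj]
  simp [deriv_conj_conj]

lemma norm_sq_profile_ofReal (x : ℝ) :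
    ‖hU.profile x‖ ^ 2 = ‖deriv U x‖ ^ 2 / 2 - x * ‖U x‖ ^ 2 := by
  obtain ⟨y, hy⟩ := Complex.conj_eq_iff_real.1
    (by rw [← hU.map_conj, Complex.conj_ofReal] : starRingEnd ℂ (U x) = U x)
  obtain ⟨y', hy'⟩ := Complex.conj_eq_iff_real.1
    (by rw [← hU.deriv_conj, Complex.conj_ofReal] : starRingEnd ℂ (deriv U x) = deriv U x)
  have hself : ((‖hU.profile x‖ ^ 2 : ℝ) : ℂ) = inner ℂ (hU.profile x) (hU.profile x) := by
    rw [inner_self_eq_norm_sq_to_K]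
    norm_cast
  apply Complex.ofReal_injective
  rw [hself, inner_profile, Complex.conj_ofReal]
  simp only [← sq]
  rw [hU.integral_sq, hy, hy']
  simp

lemma im_conj_mul_deriv (z : ℂ) :
    (starRingEnd ℂ (U z) * deriv U z).im = -2 * z.im * ‖hU.profile z‖ ^ 2 := by
  have hid := hU.two_mul_sub_mul_inner_profile z z
  rw [inner_self_eq_norm_sq_to_K, hU.map_conj, hU.deriv_conj] at hid
  have him := congrArg Complex.im hid
  simp only [Complex.coe_algebraMap, ← Complex.ofReal_pow, Complex.mul_re, Complex.mul_im,
    Complex.sub_re, Complex.sub_im, Complex.conj_re, Complex.conj_im, Complex.ofReal_re,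
    Complex.ofReal_im, Complex.re_ofNat, Complex.im_ofNat] at him ⊢
  linarith

lemma deriv_ne_zero_of_im_ne_zero {z : ℂ} (hz : z.im ≠ 0) : deriv U z ≠ 0 := fun hzero => by
  have him := hU.im_conj_mul_deriv z
  simp [hzero, hz, hU.profile_ne_zero z] at him

lemma im_two_mul_div_deriv (z : ℂ) :
    (2 * U z / deriv U z).im = 4 * z.im * (‖hU.profile z‖ ^ 2 / ‖deriv U z‖ ^ 2) := by
  have him := hU.im_conj_mul_deriv z
  rw [Complex.mul_im, Complex.conj_re, Complex.conj_im] at him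
  rw [Complex.div_im, ← Complex.normSq_eq_norm_sq]
  simp only [Complex.mul_re, Complex.mul_im, Complex.re_ofNat, Complex.im_ofNat]
  linear_combination (-2 / Complex.normSq (deriv U z)) * him

lemma two_mul_mul_norm_sq_lt (x : ℝ) : 2 * x * ‖U x‖ ^ 2 < ‖deriv U x‖ ^ 2 := by
  have hpos : 0 < ‖hU.profile x‖ ^ 2 := pow_pos (norm_pos_iff.2 (hU.profile_ne_zero x)) 2
  rw [norm_sq_profile_ofReal] at hpos
  linarith

lemma deriv_ne_zero_of_nonneg {x : ℝ} (hx : 0 ≤ x) : deriv U x ≠ 0 := fun hzero => by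
  have hlt := hU.two_mul_mul_norm_sq_lt x
  rw [hzero, norm_zero] at hlt
  nlinarith [mul_nonneg hx (sq_nonneg ‖U x‖)]

lemma tendsto_two_mul_div_deriv : Tendsto (fun x : ℝ => 2 * U x / deriv U x) atTop (𝓝 0) := by
  have hsq : Tendsto (fun x : ℝ => ‖2 * U x / deriv U x‖ ^ 2) atTop (𝓝 0) := by
    refine squeeze_zero' (.of_forall fun x => by positivity) ?_
      (tendsto_const_nhds.div_atTop tendsto_id : Tendsto (fun x : ℝ => 2 / x) atTop (𝓝 0))
    filter_upwards [eventually_gt_atTop 0] with x hx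
    have hV : 0 < ‖deriv U x‖ := norm_pos_iff.2 (hU.deriv_ne_zero_of_nonneg hx.le)
    rw [norm_div, norm_mul, Complex.norm_ofNat, div_pow, div_le_div_iff₀ (by positivity) hx]
    linarith [hU.two_mul_mul_norm_sq_lt x]
  rw [tendsto_zero_iff_norm_tendsto_zero]
  simpa only [Real.sqrt_sq (norm_nonneg _), Real.sqrt_zero] using hsq.sqrt

lemma apply_ne_zero_of_deriv_eq_zero {x : ℝ} (hzero : deriv U x = 0) : U x ≠ 0 := fun h => by
  have hlt := hU.two_mul_mul_norm_sq_lt x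
  simp [h, hzero] at hlt

lemma norm_inner_profile_sq_div {d : ℝ} (hzero : deriv U (-d) = 0) {z : ℂ} (hz : deriv U z ≠ 0) :
    ‖inner ℂ (hU.profile (-d)) (hU.profile z)‖ ^ 2 / ‖hU.profile (-d)‖ ^ 2 =
      ‖deriv U z‖ ^ 2 / 4 * (1 / (d * ‖d + z‖ ^ 2)) := by
  have hcast : ((-d : ℝ) : ℂ) = -d := Complex.ofReal_neg d
  have hUd : ‖U (-d)‖ ≠ 0 :=
    norm_ne_zero_iff.2 (hcast ▸ hU.apply_ne_zero_of_deriv_eq_zero (hcast ▸ hzero))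
  have hprofile : ‖hU.profile (-d)‖ ^ 2 = d * ‖U (-d)‖ ^ 2 := by
    have := hU.norm_sq_profile_ofReal (-d)
    rw [hcast, hzero] at this
    simpa using this
  have hinner : 2 * ‖d + z‖ * ‖inner ℂ (hU.profile (-d)) (hU.profile z)‖ =
      ‖U (-d)‖ * ‖deriv U z‖ := by
    have := congrArg norm (hU.two_mul_sub_mul_inner_profile (-d) z)
    rw [map_neg, Complex.conj_ofReal, hzero, ← neg_add', zero_mul, sub_zero] at this
    simpa only [norm_mul, norm_neg, Complex.norm_ofNat] using this
  have hdz : ‖d + z‖ ≠ 0 := norm_ne_zero_iff.2 fun h => hz <| by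
    rw [eq_neg_of_add_eq_zero_right h, hzero]
  have hd : d ≠ 0 := by
    rintro rfl
    exact hU.profile_ne_zero (-(0 : ℝ)) (by simpa using hprofile)
  rw [hprofile]
  field_simp
  linear_combination (2 * ‖d + z‖ * ‖inner ℂ (hU.profile (-d)) (hU.profile z)‖ +
      ‖U (-d)‖ * ‖deriv U z‖) * hinner

section Zeros

variable {ι : Type*} {δ : ι → ℝ}

lemma pairwise_inner_profile_eq_zero (hinj : Function.Injective δ)
    (hzero : ∀ k, deriv U (-δ k) = 0) :
    Pairwise fun j k => inner ℂ (hU.profile (-δ j)) (hU.profile (-δ k)) = 0 := fun j k hjk => by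
  have hid := hU.two_mul_sub_mul_inner_profile (-δ j) (-δ k)
  have hne : (-δ j + δ k : ℂ) ≠ 0 := by
    exact_mod_cast (neg_add_eq_zero.not.2 (hinj.ne hjk) : -δ j + δ k ≠ 0)
  simpa [hzero, hne] using hid

lemma summable_one_div_mul_norm_add_sq (hinj : Function.Injective δ)
    (hzero : ∀ k, deriv U (-δ k) = 0) {z : ℂ} (hz : deriv U z ≠ 0) :
    Summable fun k => 1 / (δ k * ‖δ k + z‖ ^ 2) := by
  have hbessel := summable_norm_inner_sq_div (fun k => hU.profile_ne_zero (-δ k))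
    (hU.pairwise_inner_profile_eq_zero hinj hzero) (hU.profile z)
  simp only [norm_inner_profile_sq_div hU (hzero _) hz] at hbessel
  exact (summable_mul_left_iff (by positivity)).1 hbessel

lemma tsum_one_div_mul_norm_add_sq_le (hinj : Function.Injective δ)
    (hzero : ∀ k, deriv U (-δ k) = 0) {z : ℂ} (hz : deriv U z ≠ 0) :
    ∑' k, 1 / (δ k * ‖δ k + z‖ ^ 2) ≤ 4 * (‖hU.profile z‖ ^ 2 / ‖deriv U z‖ ^ 2) := by
  have hbessel := tsum_norm_inner_sq_div_le (fun k => hU.profile_ne_zero (-δ k))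
    (hU.pairwise_inner_profile_eq_zero hinj hzero) (hU.profile z)
  simp only [norm_inner_profile_sq_div hU (hzero _) hz] at hbessel
  rw [tsum_mul_left] at hbessel
  rw [← mul_div_assoc, le_div_iff₀ (by positivity)]
  linarith

lemma re_neg_and_eq_ofReal_of_deriv_eq_zero {z : ℂ} (hz : deriv U z = 0) : z.re < 0 ∧ z = z.re := by
  have hreal : z = z.re :=
    Complex.ext rfl (not_not.1 fun him => hU.deriv_ne_zero_of_im_ne_zero him hz)
  exact ⟨not_le.1 fun hre => hU.deriv_ne_zero_of_nonneg hre (hreal ▸ hz), hreal⟩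

lemma summable_one_div_pow_three (hpos : ∀ k, 0 < δ k) (hinj : Function.Injective δ)
    (hzero : ∀ k, deriv U (-δ k) = 0) : Summable fun k => 1 / δ k ^ 3 := by
  have h0 : deriv U 0 ≠ 0 := by exact_mod_cast hU.deriv_ne_zero_of_nonneg le_rfl
  convert hU.summable_one_div_mul_norm_add_sq hinj hzero h0 using 3 with k
  rw [add_zero, Complex.norm_of_nonneg (hpos k).le, ← pow_succ']

lemma analyticAt_deriv (z : ℂ) : AnalyticAt ℂ (deriv U) z := (hU.differentiable.analyticAt z).deriv

lemma exists_analyticAt_two_mul_div_deriv_sub_polarTerm {d : ℝ} (hd : d ≠ 0)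
    (hzero : deriv U (-d) = 0) :
    ∃ H : ℂ → ℂ, AnalyticAt ℂ H (-d) ∧
      (fun z => 2 * U z / deriv U z - polarTerm d z) =ᶠ[𝓝[≠] (-d : ℂ)] H := by
  have hd' : (d : ℂ) ≠ 0 := Complex.ofReal_ne_zero.2 hd
  have hUd : U (-d) ≠ 0 := by
    have hcast : ((-d : ℝ) : ℂ) = -d := Complex.ofReal_neg d
    exact hcast ▸ hU.apply_ne_zero_of_deriv_eq_zero (hcast ▸ hzero)
  have hderiv : deriv (deriv U) (-d) = 2 * -d * U (-d) := (hU.hasDerivAt_deriv _).deriv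
  obtain ⟨H, hH, heq⟩ := exists_analyticAt_div_sub_div_sub_eventuallyEq
    ((hU.differentiable.const_mul 2).analyticAt (-d : ℂ)) (hU.analyticAt_deriv _) hzero
    (by simp [hderiv, hd, hUd])
  refine ⟨fun z => H z - 1 / d ^ 2, hH.sub analyticAt_const, ?_⟩
  filter_upwards [heq, self_mem_nhdsWithin] with z hz hzd
  have hdz : d + z ≠ 0 := fun h => hzd (eq_neg_of_add_eq_zero_right h)
  have hpolar : polarTerm d z = 2 * U (-d) / (2 * -d * U (-d)) / (z - -d) + 1 / d ^ 2 := by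
    rw [polarTerm, sub_neg_eq_add, add_comm z]
    field_simp
    ring
  rw [← hz, hderiv, hpolar, sub_sub]

lemma analyticAt_sub_tsum_polarTerm (hpos : ∀ k, 0 < δ k) (hinj : Function.Injective δ)
    (hzero : ∀ k, deriv U (-δ k) = 0) {z : ℂ} (hz : deriv U z ≠ 0) :
    AnalyticAt ℂ (fun z => 2 * U z / deriv U z - ∑' k, polarTerm (δ k) z) z :=
  (((hU.differentiable.const_mul 2).analyticAt z).div (hU.analyticAt_deriv z) hz).sub <|
    analyticAt_tsum_polarTerm hpos (hU.summable_one_div_pow_three hpos hinj hzero) fun k h =>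
      hz <| by rw [eq_neg_of_add_eq_zero_right h, hzero]

lemma exists_analyticAt_sub_tsum_polarTerm (hpos : ∀ k, 0 < δ k) (hinj : Function.Injective δ)
    (hzero : ∀ k, deriv U (-δ k) = 0) (hall : ∀ z, deriv U z = 0 → ∃ k, z = -δ k) (z : ℂ) :
    ∃ H, AnalyticAt ℂ H z ∧
      (fun z => 2 * U z / deriv U z - ∑' k, polarTerm (δ k) z) =ᶠ[𝓝[≠] z] H := by
  have hsum := hU.summable_one_div_pow_three hpos hinj hzero
  by_cases hz : deriv U z = 0
  · obtain ⟨j, rfl⟩ := hall z hz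
    obtain ⟨H₁, hH₁, heq₁⟩ :=
      hU.exists_analyticAt_two_mul_div_deriv_sub_polarTerm (hpos j).ne' (hzero j)
    obtain ⟨H₂, hH₂, heq₂⟩ := exists_analyticAt_tsum_polarTerm_eq_add hpos hinj hsum j
    refine ⟨fun z => H₁ z - H₂ z, hH₁.sub hH₂, ?_⟩
    filter_upwards [heq₁] with w hw
    rw [← hw, heq₂, sub_sub]
  · exact ⟨_, hU.analyticAt_sub_tsum_polarTerm hpos hinj hzero hz, EventuallyEq.rfl⟩

lemma im_sub_tsum_polarTerm_mul_im_nonneg (hpos : ∀ k, 0 < δ k) (hinj : Function.Injective δ)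
    (hzero : ∀ k, deriv U (-δ k) = 0) {z : ℂ} (him : z.im ≠ 0) :
    0 ≤ (2 * U z / deriv U z - ∑' k, polarTerm (δ k) z).im * z.im := by
  have hz := hU.deriv_ne_zero_of_im_ne_zero him
  have hsum := summable_polarTerm hpos (hU.summable_one_div_pow_three hpos hinj hzero) z
  have hbessel := hU.tsum_one_div_mul_norm_add_sq_le hinj hzero hz
  rw [Complex.sub_im, Complex.im_tsum hsum, hU.im_two_mul_div_deriv]
  simp only [im_polarTerm, tsum_mul_left]
  nlinarith [mul_self_nonneg z.im]

lemma exists_two_mul_div_deriv_eq_add_tsum_polarTerm (hpos : ∀ k, 0 < δ k)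
    (hinj : Function.Injective δ) (hzero : ∀ k, deriv U (-δ k) = 0)
    (hall : ∀ z, deriv U z = 0 → ∃ k, z = -δ k) :
    ∃ a c : ℂ, ∀ z, deriv U z ≠ 0 →
      2 * U z / deriv U z = a + c * z + ∑' k, polarTerm (δ k) z := by
  obtain ⟨F, hF, hFeq⟩ := exists_differentiable_eq_of_forall_eventuallyEq
    (hU.exists_analyticAt_sub_tsum_polarTerm hpos hinj hzero hall)
  have hsub {z : ℂ} (hz : deriv U z ≠ 0) := hFeq z <|
    hU.analyticAt_sub_tsum_polarTerm hpos hinj hzero hz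
  have him (z : ℂ) : 0 ≤ (F z).im * z.im := by
    rcases eq_or_ne z.im 0 with h | h
    · rw [h, mul_zero]
    · rw [hsub (hU.deriv_ne_zero_of_im_ne_zero h)]
      exact hU.im_sub_tsum_polarTerm_mul_im_nonneg hpos hinj hzero h
  refine ⟨F 0, deriv F 0, fun z hz => ?_⟩
  rw [← apply_eq_add_mul_of_forall_im_mul_im_nonneg hF him, hsub hz, sub_add_cancel]

lemma exists_re_two_mul_div_deriv_eq_add_tsum (hpos : ∀ k, 0 < δ k) (hinj : Function.Injective δ)
    (hzero : ∀ k, deriv U (-δ k) = 0) (hall : ∀ z, deriv U z = 0 → ∃ k, z = -δ k) :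
    ∃ a c : ℝ, ∀ x : ℝ, 0 ≤ x →
      (2 * U x / deriv U x).re = a + c * x + ∑' k, x / (δ k + x) / δ k ^ 2 := by
  obtain ⟨a, c, hac⟩ := hU.exists_two_mul_div_deriv_eq_add_tsum_polarTerm hpos hinj hzero hall
  refine ⟨a.re, c.re, fun x hx => ?_⟩
  rw [hac x (hU.deriv_ne_zero_of_nonneg hx)]
  simp only [ofReal_polarTerm, ← Complex.ofReal_tsum, Complex.add_re, Complex.ofReal_re,
    Complex.re_mul_ofReal]

lemma hasSum_one_div_mul_add (hpos : ∀ k, 0 < δ k) (hinj : Function.Injective δ)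
    (hzero : ∀ k, deriv U (-δ k) = 0) (hall : ∀ z, deriv U z = 0 → ∃ k, z = -δ k) {x : ℝ}
    (hx : 0 ≤ x) : HasSum (fun k => 1 / (δ k * (δ k + x))) (-(2 * U x / deriv U x).re) := by
  obtain ⟨a, c, hac⟩ := hU.exists_re_two_mul_div_deriv_eq_add_tsum hpos hinj hzero hall
  exact hasSum_one_div_mul_add_of_tendsto_zero hpos
    (hU.summable_one_div_pow_three hpos hinj hzero) hac
    (Complex.continuous_re.tendsto' 0 0 Complex.zero_re |>.comp hU.tendsto_two_mul_div_deriv) hx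

end Zeros

end IsRecessiveAiry

namespace IsAirySolution

variable {𝕜 : Type*} [RCLike 𝕜] {U : 𝕜 → 𝕜}

lemma hasDerivAt_two_mul_div_deriv (hU : IsAirySolution U) {z : 𝕜} (hz : deriv U z ≠ 0) :
    HasDerivAt (fun z => 2 * U z / deriv U z) (2 - z * (2 * U z / deriv U z) ^ 2) z := by
  refine (((hU.differentiable z).hasDerivAt.const_mul 2).fun_div
    (hU.hasDerivAt_deriv z) hz).congr_deriv ?_
  field_simp

variable {u : ℝ → ℝ} (hu : IsAirySolution u) (hne : u ≠ 0) (hlim : Tendsto u atTop (𝓝 0))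

include hu hne hlim

lemma deriv_ne_zero_of_nonneg {x : ℝ} (hx : 0 ≤ x) : deriv u x ≠ 0 := by
  obtain ⟨U, hU, -, hderiv⟩ := hu.exists_isRecessiveAiry hne hlim
  exact_mod_cast hderiv x ▸ hU.deriv_ne_zero_of_nonneg hx

lemma tendsto_two_mul_div_deriv : Tendsto (fun x => 2 * u x / deriv u x) atTop (𝓝 0) := by
  obtain ⟨U, hU, hext, hderiv⟩ := hu.exists_isRecessiveAiry hne hlim
  have hre := (Complex.continuous_re.tendsto 0).comp hU.tendsto_two_mul_div_deriv
  simp only [Function.comp_def, hext, hderiv] at hre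
  exact_mod_cast hre

variable {ι : Type*} {δ : ι → ℝ}

lemma summable_one_div_pow_three (hpos : ∀ k, 0 < δ k) (hinj : Function.Injective δ)
    (hzero : ∀ k, deriv u (-δ k) = 0) : Summable fun k => 1 / δ k ^ 3 := by
  obtain ⟨U, hU, -, hderiv⟩ := hu.exists_isRecessiveAiry hne hlim
  refine hU.summable_one_div_pow_three hpos hinj fun k => ?_
  rw [← Complex.ofReal_neg, hderiv, hzero, Complex.ofReal_zero]

lemma hasSum_one_div_mul_add (hpos : ∀ k, 0 < δ k) (hinj : Function.Injective δ)
    (hzero : ∀ k, deriv u (-δ k) = 0)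
    (hall : ∀ x : ℝ, 0 < x → deriv u (-x) = 0 → ∃ k, δ k = x) {x : ℝ} (hx : 0 ≤ x) :
    HasSum (fun k => 1 / (δ k * (δ k + x))) (-(2 * u x / deriv u x)) := by
  obtain ⟨U, hU, hext, hderiv⟩ := hu.exists_isRecessiveAiry hne hlim
  have hzeroU (k : ι) : deriv U (-δ k) = 0 := by
    rw [← Complex.ofReal_neg, hderiv, hzero, Complex.ofReal_zero]
  have hallU (z : ℂ) (hz : deriv U z = 0) : ∃ k, z = -δ k := by
    obtain ⟨hneg, hreal⟩ := hU.re_neg_and_eq_ofReal_of_deriv_eq_zero hz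
    rw [hreal, hderiv, Complex.ofReal_eq_zero] at hz
    obtain ⟨k, hk⟩ := hall (-z.re) (neg_pos.2 hneg) (by rwa [neg_neg])
    exact ⟨k, by rw [hk, Complex.ofReal_neg, neg_neg, ← hreal]⟩
  have hsum := hU.hasSum_one_div_mul_add hpos hinj hzeroU hallU hx
  rw [hext, hderiv] at hsum
  exact_mod_cast hsum

lemma infinite_of_forall_exists_eq (hpos : ∀ k, 0 < δ k) (hinj : Function.Injective δ)
    (hzero : ∀ k, deriv u (-δ k) = 0)
    (hall : ∀ x : ℝ, 0 < x → deriv u (-x) = 0 → ∃ k, δ k = x) : Infinite ι :=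
  infinite_of_hasSum_of_hasDerivAt
    (fun _ => hu.hasSum_one_div_mul_add hne hlim hpos hinj hzero hall)
    (fun _ hx => hu.hasDerivAt_two_mul_div_deriv (hu.deriv_ne_zero_of_nonneg hne hlim hx))
    (hu.tendsto_two_mul_div_deriv hne hlim)

end IsAirySolution

theorem stmt10_general {u : ℝ → ℝ} (hu : ContDiff ℝ 2 u)
    (hode : ∀ h : ℝ, deriv (deriv u) h = 2 * h * u h) (hne : u ≠ 0)
    (hlim : Tendsto u atTop (𝓝 0)) {ι : Type*} {δ : ι → ℝ} (hδ_pos : ∀ k, 0 < δ k)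
    (hδ_inj : Function.Injective δ) (hδ_zero : ∀ k, deriv u (-(δ k)) = 0)
    (hδ_all : ∀ x : ℝ, 0 < x → deriv u (-x) = 0 → ∃ k, δ k = x) :
    {x : ℝ | 0 < x ∧ deriv u (-x) = 0}.Infinite ∧
    Tendsto δ cofinite atTop ∧
    (∀ z : ℝ, 0 ≤ z → deriv u z ≠ 0) ∧
    (∀ z : ℝ, 0 ≤ z →
      Summable (fun k => |(1 / δ k) * (z / (δ k + z))|) ∧
      deriv (deriv u) z / deriv u z = -∑' k, (1 / δ k) * (z / (δ k + z))) := by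
  have hu := IsAirySolution.of_contDiff hu hode
  have hinf := hu.infinite_of_forall_exists_eq hne hlim hδ_pos hδ_inj hδ_zero hδ_all
  refine ⟨(infinite_range_of_injective hδ_inj).mono
      (range_subset_iff.2 fun k => ⟨hδ_pos k, hδ_zero k⟩),
    tendsto_cofinite_atTop_of_summable_one_div_pow hδ_pos
      (hu.summable_one_div_pow_three hne hlim hδ_pos hδ_inj hδ_zero),
    fun z hz => hu.deriv_ne_zero_of_nonneg hne hlim hz, fun z hz => ?_⟩
  have hsum := (hu.hasSum_one_div_mul_add hne hlim hδ_pos hδ_inj hδ_zero hδ_all hz).mul_left z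
  have hterm (k : ι) : z * (1 / (δ k * (δ k + z))) = 1 / δ k * (z / (δ k + z)) := by
    rw [div_mul_div_comm, one_mul, mul_one_div]
  simp only [hterm] at hsum
  refine ⟨hsum.summable.abs, ?_⟩
  rw [hsum.tsum_eq, hode]
  ring

/-- the zero set of `h ↦ u'(-h)` on `(0,∞)` is infinite; its increasing
enumeration `δ k` (here `δ k` stands for `δ'_{k+1}`) tends to `∞`; `u' ≠ 0` on `[0,∞)`;
and the key identity `u''(z)/u'(z) = -∑ₖ (1/δₖ)·z/(δₖ+z)` holds for `z ≥ 0`, the series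
being absolutely convergent. -/
theorem stmt10
    (u : ℝ → ℝ) (hu_smooth : ContDiff ℝ 2 u)
    (hu_ode : ∀ h : ℝ, deriv (deriv u) h = 2 * h * u h)
    (hu_zero : u 0 = 1)
    (hu'_zero : deriv u 0 = -((6:ℝ) ^ ((1:ℝ)/3) * Real.Gamma (2/3) / Real.Gamma (1/3)))
    (hu_pos : ∀ h : ℝ, 0 ≤ h → 0 < u h)
    (hu_anti : StrictAntiOn u (Ici 0))
    (hu_lim : Tendsto u atTop (𝓝 0))
    (δ : ℕ → ℝ) (hδ_pos : ∀ k, 0 < δ k) (hδ_mono : StrictMono δ)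
    (hδ_zero : ∀ k, deriv u (-(δ k)) = 0)
    (hδ_all : ∀ x : ℝ, 0 < x → deriv u (-x) = 0 → ∃ k, δ k = x) :
    {x : ℝ | 0 < x ∧ deriv u (-x) = 0}.Infinite ∧
    Tendsto δ atTop atTop ∧
    (∀ z : ℝ, 0 ≤ z → deriv u z ≠ 0) ∧
    (∀ z : ℝ, 0 ≤ z →
      Summable (fun k : ℕ => |(1 / δ k) * (z / (δ k + z))|) ∧
      deriv (deriv u) z / deriv u z = -∑' k : ℕ, (1 / δ k) * (z / (δ k + z))) := by
  simpa only [Nat.cofinite_eq_atTop] using stmt10_general hu_smooth hu_ode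
    (fun h => by simp [h] at hu_zero) hu_lim hδ_pos hδ_mono.injective hδ_zero hδ_all
end
end

section
/- Let u be the normalized Airy function and let 0 < δ'₁ < δ'₂ < ... be the increasing enumeration of the zeros of h ↦ u'(-h) on (0,∞). Then the following trace formulas hold: ∑_{k=1}^∞ (δ'ₖ)^{-2} = -2/u'(0), ∑_{k=1}^∞ (δ'ₖ)^{-3} = 2, and ∑_{k=1}^∞ (δ'ₖ)^{-4} = 2/u'(0)². In particular, setting pₖ := (u'(0)²/2)·(δ'ₖ)^{-4}, one has ∑_{k=1}^∞ pₖ = 1. -/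
open Real MeasureTheory Set Filter Topology

noncomputable section

/-!
The operator `-f'' + 2xf` on the half-line with a Neumann condition at `0` has the eigenfunctions
`u (x - δₖ)`, with eigenvalues `2δₖ`. By Rolle's theorem the `N`-th one has at most `N` zeros, so
Picone's identity shows that its eigenvalue bounds the quadratic form below on a subspace of
codimension at most `N`. Comparing dimensions, the same bound holds on the orthogonal complement
of the first `N` eigenfunctions; as the eigenvalues tend to infinity, the eigenfunctions are
complete.

The translates `u (x + s)` with `s ≥ 0` solve `f'' = 2(x + s)f`, so integration by parts computes
their inner products with each other and with the eigenfunctions, and Parseval's identity becomes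
a closed formula for `∑ 1 / (δₖ (s + δₖ) (t + δₖ))`. The sum of the `δₖ⁻³` is the case
`s = t = 0`, that of the `δₖ⁻²` comes from `s = 0` and `t → ∞`, and that of the `δₖ⁻⁴` from the
derivative along `s = t` at `0`.
-/

theorem card_le_card_of_neg_of_ker_nonneg {K V ι κ : Type*} [Field K] [LinearOrder K]
    [IsStrictOrderedRing K] [AddCommGroup V] [Module K V] [Fintype ι] [Fintype κ]
    (B : LinearMap.BilinForm K V) {b : ι → V} (hortho : Pairwise fun i j => B (b i) (b j) = 0)
    (hneg : ∀ i, B (b i) (b i) < 0) (L : V →ₗ[K] κ → K) (hL : ∀ w, L w = 0 → 0 ≤ B w w) :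
    Fintype.card ι ≤ Fintype.card κ := by
  by_contra! hlt
  have hker : LinearMap.ker (L ∘ₗ Fintype.linearCombination K b) ≠ ⊥ :=
    LinearMap.ker_ne_bot_of_finrank_lt (by simpa using hlt)
  obtain ⟨d, hd, hd0⟩ := Submodule.exists_mem_ne_zero_of_ne_bot hker
  obtain ⟨i₀, hi₀⟩ := Function.ne_iff.mp hd0
  have hdiag : B (∑ i, d i • b i) (∑ i, d i • b i) = ∑ i, d i ^ 2 * B (b i) (b i) := by
    simp only [map_sum, LinearMap.sum_apply, map_smul, LinearMap.smul_apply, smul_eq_mul]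
    refine Finset.sum_congr rfl fun i _ => ?_
    rw [Finset.sum_eq_single i (fun j _ hji => by simp [hortho hji]) (by simp)]
    ring
  have hnonneg : 0 ≤ B (∑ i, d i • b i) (∑ i, d i • b i) := hL _ hd
  have hneg_sum : ∑ i, d i ^ 2 * B (b i) (b i) < 0 :=
    Finset.sum_neg' (fun i _ => mul_nonpos_of_nonneg_of_nonpos (sq_nonneg _) (hneg i).le)
      ⟨i₀, Finset.mem_univ _, mul_neg_of_pos_of_neg (sq_pos_of_ne_zero hi₀) (hneg i₀)⟩
  exact hneg_sum.not_ge (hdiag ▸ hnonneg)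

section SecondOrderODE

variable {φ φ' q : ℝ → ℝ}

theorem eq_zero_of_hasDerivAt_mul_self (hq : Continuous q) (hφ : ∀ x, HasDerivAt φ (φ' x) x)
    (hφ' : ∀ x, HasDerivAt φ' (q x * φ x) x) {c : ℝ} (hc : φ c = 0) (hc' : φ' c = 0) (x : ℝ) :
    φ x = 0 := by
  obtain ⟨a, b, hxab, hcab⟩ : ∃ a b, x ∈ Ioo a b ∧ c ∈ Ioo a b :=
    ⟨min x c - 1, max x c + 1, by grind, by grind⟩
  obtain ⟨M, hM⟩ := isCompact_Icc.exists_bound_of_continuousOn (s := Icc a b) hq.continuousOn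
  have hLip : ∀ t ∈ Ioo a b, LipschitzOnWith (max 1 M.toNNReal)
      (fun p : ℝ × ℝ => (p.2, q t * p.1)) univ := by
    intro t ht
    refine ((LipschitzWith.prod_snd.prodMk (LipschitzWith.of_dist_le_mul fun p p' => ?_)).weaken
      le_rfl).lipschitzOnWith
    rw [dist_eq_norm, ← mul_sub, norm_mul]
    have hqM : ‖q t‖ ≤ M.toNNReal := (hM t (Ioo_subset_Icc_self ht)).trans (le_coe_toNNReal M)
    gcongr
    exact le_max_left _ _
  have hsol : ∀ t ∈ Ioo a b, HasDerivAt (fun t => (φ t, φ' t)) (φ' t, q t * φ t) t ∧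
      (φ t, φ' t) ∈ univ := fun t _ => ⟨(hφ t).prodMk (hφ' t), mem_univ _⟩
  have hzero : ∀ t ∈ Ioo a b, HasDerivAt (fun _ => ((0 : ℝ), (0 : ℝ))) (0, q t * 0) t ∧
      ((0 : ℝ), (0 : ℝ)) ∈ univ := fun t _ =>
    ⟨((hasDerivAt_const t 0).prodMk (hasDerivAt_const t 0)).congr_deriv (by simp), mem_univ _⟩
  exact congrArg Prod.fst
    (ODE_solution_unique_of_mem_Ioo hLip hcab hsol hzero (by simp [hc, hc']) hxab)

-- At a common zero of `w` and `φ` the junk value `w x ^ 2 * φ' x / 0 = 0` is the continuous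
-- extension of the quotient.
theorem hasDerivAt_sq_mul_div_of_eq_zero {w : ℝ → ℝ} {w' x : ℝ} (hφ : HasDerivAt φ (φ' x) x)
    (hφ' : ContinuousAt φ' x) (hw : HasDerivAt w w' x) (hφx : φ x = 0) (hφ'x : φ' x ≠ 0)
    (hwx : w x = 0) : HasDerivAt (fun y => w y ^ 2 * φ' y / φ y) (w' ^ 2) x := by
  rw [hasDerivAt_iff_tendsto_slope] at hφ hw ⊢
  have hlim := ((hw.pow 2).mul (hφ'.tendsto.mono_left nhdsWithin_le_nhds)).div hφ hφ'x
  rw [mul_div_cancel_right₀ _ hφ'x] at hlim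
  refine hlim.congr' ?_
  filter_upwards [self_mem_nhdsWithin] with y hy
  have hyx : y - x ≠ 0 := sub_ne_zero.mpr hy
  simp only [Pi.div_apply, slope_def_field, hφx, hwx, sub_zero, div_zero]
  by_cases hφy : φ y = 0
  · simp [hφy]
  · field_simp

theorem hasDerivAt_sq_mul_div_of_ne_zero {w : ℝ → ℝ} {w' x : ℝ} (hφ : HasDerivAt φ (φ' x) x)
    (hφ' : HasDerivAt φ' (q x * φ x) x) (hw : HasDerivAt w w' x) (hφx : φ x ≠ 0) :
    HasDerivAt (fun y => w y ^ 2 * φ' y / φ y)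
      (w' ^ 2 + q x * w x ^ 2 - (w' - w x * φ' x / φ x) ^ 2) x := by
  refine (((hw.pow 2).mul hφ').div hφ hφx).congr_deriv ?_
  simp only [Pi.mul_apply, Pi.pow_apply]
  field_simp
  ring

theorem picone_le_integral {w w' : ℝ → ℝ} {a b : ℝ} (hab : a ≤ b)
    (hφ : ∀ x ∈ Icc a b, HasDerivAt φ (φ' x) x)
    (hφ' : ∀ x ∈ Icc a b, HasDerivAt φ' (q x * φ x) x)
    (hw : ∀ x ∈ Icc a b, HasDerivAt w (w' x) x)
    (hzero : ∀ x ∈ Icc a b, φ x = 0 → w x = 0 ∧ φ' x ≠ 0)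
    (hint : IntegrableOn (fun x => w' x ^ 2 + q x * w x ^ 2) (Icc a b)) :
    w b ^ 2 * φ' b / φ b - w a ^ 2 * φ' a / φ a ≤ ∫ x in a..b, w' x ^ 2 + q x * w x ^ 2 := by
  have hderiv : ∀ x ∈ Icc a b, ∃ d, HasDerivAt (fun y => w y ^ 2 * φ' y / φ y) d x ∧
      d ≤ w' x ^ 2 + q x * w x ^ 2 := by
    intro x hx
    by_cases hφx : φ x = 0
    · obtain ⟨hwx, hφ'x⟩ := hzero x hx hφx
      exact ⟨_, hasDerivAt_sq_mul_div_of_eq_zero (hφ x hx) (hφ' x hx).continuousAt (hw x hx)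
        hφx hφ'x hwx, by simp [hwx]⟩
    · exact ⟨_, hasDerivAt_sq_mul_div_of_ne_zero (hφ x hx) (hφ' x hx) (hw x hx) hφx,
        sub_le_self _ (sq_nonneg _)⟩
  choose! d hd hd_le using hderiv
  exact intervalIntegral.sub_le_integral_of_hasDeriv_right_of_le hab
    (fun x hx => (hd x hx).continuousAt.continuousWithinAt)
    (fun x hx => (hd x (Ioo_subset_Icc_self hx)).hasDerivWithinAt) hint
    (fun x hx => hd_le x (Ioo_subset_Icc_self hx))

end SecondOrderODE

section ExpDecay

theorem isBigO_exp_neg_mul_mul {p f g : ℝ → ℝ} (hp : p =O[atTop] exp)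
    (hf : f =O[atTop] fun x => exp (-x)) (hg : g =O[atTop] fun x => exp (-x)) :
    (fun x => p x * (f x * g x)) =O[atTop] fun x => exp (-x) := by
  refine (hp.mul (hf.mul hg)).congr_right fun x => ?_
  rw [← exp_add, ← exp_add]
  congr 1
  ring

theorem tendsto_zero_of_isBigO_exp_neg {f : ℝ → ℝ} (hf : f =O[atTop] fun x => exp (-x)) :
    Tendsto f atTop (𝓝 0) :=
  hf.trans_tendsto tendsto_exp_neg_atTop_nhds_zero

theorem integrableOn_mul_mul_of_isBigO_exp_neg {p f g : ℝ → ℝ} (hpc : Continuous p)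
    (hfc : Continuous f) (hgc : Continuous g) (hp : p =O[atTop] exp)
    (hf : f =O[atTop] fun x => exp (-x)) (hg : g =O[atTop] fun x => exp (-x)) (a : ℝ) :
    IntegrableOn (fun x => p x * (f x * g x)) (Ioi a) :=
  integrable_of_isBigO_exp_neg one_pos (hpc.mul (hfc.mul hgc)).continuousOn
    (by simpa using isBigO_exp_neg_mul_mul hp hf hg)

theorem isBigO_one_exp : (fun _ => 1 : ℝ → ℝ) =O[atTop] exp :=
  (Asymptotics.isLittleO_const_left.mpr
    (Or.inr (tendsto_norm_atTop_atTop.comp tendsto_exp_atTop))).isBigO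

theorem isBigO_linear_exp (c : ℝ) : (fun x => 2 * (x - c)) =O[atTop] exp := by
  have hid : (fun x : ℝ => x) =o[atTop] exp := by simpa using isLittleO_pow_exp_atTop (n := 1)
  have hconst : (fun _ : ℝ => c) =O[atTop] exp := by simpa using isBigO_one_exp.const_mul_left c
  exact (hid.isBigO.sub hconst).const_mul_left 2

/-- The space of test functions for the Airy operator `-f'' + 2xf` on the half-line `(0, ∞)`:
continuously differentiable functions that are `O(exp (-x))` at infinity together with their
derivative. They are defined on all of `ℝ` so that no one-sided derivative is needed at `0`. -/
def expDecay : Submodule ℝ (ℝ → ℝ) where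
  carrier := {f | ContDiff ℝ 1 f ∧ (f =O[atTop] fun x => exp (-x)) ∧
    deriv f =O[atTop] fun x => exp (-x)}
  add_mem' := by
    rintro f g ⟨hf, hfO, hf'O⟩ ⟨hg, hgO, hg'O⟩
    refine ⟨hf.add hg, hfO.add hgO, (hf'O.add hg'O).congr_left fun x => ?_⟩
    exact (deriv_add (hf.differentiable_one x) (hg.differentiable_one x)).symm
  zero_mem' := ⟨contDiff_const, Asymptotics.isBigO_zero _ _, by
    rw [deriv_zero]
    exact Asymptotics.isBigO_zero _ _⟩
  smul_mem' := by
    rintro c f ⟨hf, hfO, hf'O⟩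
    refine ⟨contDiff_const.smul hf, hfO.const_smul_left c,
      (hf'O.const_smul_left c).congr_left fun x => ?_⟩
    exact (deriv_const_smul c (hf.differentiable_one x)).symm

namespace expDecay

variable (f g : expDecay)

theorem hasDerivAt (x : ℝ) : HasDerivAt f.1 (deriv f.1 x) x :=
  (f.2.1.differentiable_one x).hasDerivAt

theorem integrableOn_mul : IntegrableOn (fun x => f.1 x * g.1 x) (Ioi 0) := by
  simpa only [one_mul] using integrableOn_mul_mul_of_isBigO_exp_neg continuous_const
    f.2.1.continuous g.2.1.continuous isBigO_one_exp f.2.2.1 g.2.2.1 0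

theorem integrableOn_deriv_mul_deriv :
    IntegrableOn (fun x => deriv f.1 x * deriv g.1 x) (Ioi 0) := by
  simpa only [one_mul] using integrableOn_mul_mul_of_isBigO_exp_neg continuous_const
    f.2.1.continuous_deriv_one g.2.1.continuous_deriv_one isBigO_one_exp f.2.2.2 g.2.2.2 0

theorem integrableOn_linear_mul (c : ℝ) :
    IntegrableOn (fun x => 2 * (x - c) * (f.1 x * g.1 x)) (Ioi 0) :=
  integrableOn_mul_mul_of_isBigO_exp_neg (by fun_prop) f.2.1.continuous g.2.1.continuous
    (isBigO_linear_exp c) f.2.2.1 g.2.2.1 0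

theorem integrableOn_energy (c : ℝ) : IntegrableOn
    (fun x => deriv f.1 x * deriv g.1 x + 2 * (x - c) * (f.1 x * g.1 x)) (Ioi 0) :=
  (integrableOn_deriv_mul_deriv f g).add (integrableOn_linear_mul f g c)

/-- The inner product of `L²(0, ∞)` on test functions. -/
def l2 : LinearMap.BilinForm ℝ expDecay :=
  LinearMap.mk₂ ℝ (fun f g => ∫ x in Ioi 0, f.1 x * g.1 x)
    (fun f₁ f₂ g => by
      rw [← integral_add (integrableOn_mul f₁ g) (integrableOn_mul f₂ g)]
      simp [add_mul])
    (fun c f g => by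
      rw [smul_eq_mul, ← integral_const_mul]
      simp [mul_assoc])
    (fun f g₁ g₂ => by
      rw [← integral_add (integrableOn_mul f g₁) (integrableOn_mul f g₂)]
      simp [mul_add])
    (fun c f g => by
      rw [smul_eq_mul, ← integral_const_mul]
      simp [mul_left_comm])

/-- The quadratic form of the Neumann realization of `-f'' + 2(x - c)f` on `(0, ∞)`. -/
def energy (c : ℝ) : LinearMap.BilinForm ℝ expDecay :=
  LinearMap.mk₂ ℝ
    (fun f g => ∫ x in Ioi 0, deriv f.1 x * deriv g.1 x + 2 * (x - c) * (f.1 x * g.1 x))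
    (fun f₁ f₂ g => by
      rw [← integral_add (integrableOn_energy f₁ g c) (integrableOn_energy f₂ g c)]
      refine integral_congr_ae (ae_of_all _ fun x => ?_)
      simp only [Submodule.coe_add, Pi.add_apply, ((hasDerivAt f₁ x).add (hasDerivAt f₂ x)).deriv]
      ring)
    (fun r f g => by
      rw [smul_eq_mul, ← integral_const_mul]
      refine integral_congr_ae (ae_of_all _ fun x => ?_)
      simp only [Submodule.coe_smul, Pi.smul_apply, smul_eq_mul,
        ((hasDerivAt f x).const_smul r).deriv]
      ring)
    (fun f g₁ g₂ => by
      rw [← integral_add (integrableOn_energy f g₁ c) (integrableOn_energy f g₂ c)]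
      refine integral_congr_ae (ae_of_all _ fun x => ?_)
      simp only [Submodule.coe_add, Pi.add_apply, ((hasDerivAt g₁ x).add (hasDerivAt g₂ x)).deriv]
      ring)
    (fun r f g => by
      rw [smul_eq_mul, ← integral_const_mul]
      refine integral_congr_ae (ae_of_all _ fun x => ?_)
      simp only [Submodule.coe_smul, Pi.smul_apply, smul_eq_mul,
        ((hasDerivAt g x).const_smul r).deriv]
      ring)

theorem l2_comm : l2 f g = l2 g f := by
  simp only [l2, LinearMap.mk₂_apply, mul_comm]

theorem energy_comm (c : ℝ) : energy c f g = energy c g f := by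
  simp only [energy, LinearMap.mk₂_apply, mul_comm]

theorem l2_self_nonneg : 0 ≤ l2 f f :=
  integral_nonneg fun x => mul_self_nonneg (f.1 x)

theorem energy_zero_self_nonneg : 0 ≤ energy 0 f f :=
  setIntegral_nonneg measurableSet_Ioi fun x (hx : 0 < x) => by
    have := mul_self_nonneg (deriv f.1 x)
    have := mul_self_nonneg (f.1 x)
    rw [sub_zero]
    positivity

theorem energy_eq_energy_sub (c d : ℝ) :
    energy c f g = energy d f g - 2 * (c - d) * l2 f g := by
  simp only [energy, l2, LinearMap.mk₂_apply]
  rw [← integral_const_mul,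
    ← integral_sub (integrableOn_energy f g d) ((integrableOn_mul f g).const_mul _)]
  refine integral_congr_ae (ae_of_all _ fun x => ?_)
  ring

theorem energy_self_nonneg_of_zeros {φ φ' : ℝ → ℝ} {c : ℝ}
    (hφ : ∀ x, HasDerivAt φ (φ' x) x) (hφ' : ∀ x, HasDerivAt φ' (2 * (x - c) * φ x) x)
    (hφ'0 : φ' 0 = 0) (hlog : (fun x => φ' x / φ x) =O[atTop] exp)
    (hzero : ∀ x, 0 ≤ x → φ x = 0 → f.1 x = 0 ∧ φ' x ≠ 0) : 0 ≤ energy c f f := by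
  have hpicone : ∀ b, 0 ≤ b → φ' b / φ b * (f.1 b * f.1 b) ≤
      ∫ x in 0..b, deriv f.1 x ^ 2 + 2 * (x - c) * f.1 x ^ 2 := by
    intro b hb
    have hcont : Continuous fun x => deriv f.1 x ^ 2 + 2 * (x - c) * f.1 x ^ 2 :=
      (f.2.1.continuous_deriv_one.pow 2).add (by have := f.2.1.continuous; fun_prop)
    convert picone_le_integral hb (fun x _ => hφ x) (fun x _ => hφ' x)
      (fun x _ => hasDerivAt f x) (fun x hx => hzero x hx.1) hcont.integrableOn_Icc using 1
    rw [hφ'0]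
    ring
  have hboundary : Tendsto (fun b => φ' b / φ b * (f.1 b * f.1 b)) atTop (𝓝 0) :=
    tendsto_zero_of_isBigO_exp_neg (isBigO_exp_neg_mul_mul hlog f.2.2.1 f.2.2.1)
  have hintegral : Tendsto (fun b => ∫ x in 0..b, deriv f.1 x ^ 2 + 2 * (x - c) * f.1 x ^ 2)
      atTop (𝓝 (energy c f f)) := by
    simpa only [sq, energy, LinearMap.mk₂_apply, id] using
      intervalIntegral_tendsto_integral_Ioi 0 (integrableOn_energy f f c) tendsto_id
  exact le_of_tendsto_of_tendsto hboundary hintegral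
    ((eventually_ge_atTop 0).mono hpicone)

end expDecay

end ExpDecay

section Eigensystem

variable {V : Type*} [AddCommGroup V] [Module ℝ V]

/-- A sequence `e` of weak eigenvectors of the symmetric form `E` relative to the symmetric form
`B`, with strictly increasing eigenvalues `μ`: the abstract form of an eigenvalue problem for a
self-adjoint operator with quadratic form `E` in a Hilbert space with inner product `B`. -/
structure IsEigensystem (B E : LinearMap.BilinForm ℝ V) (e : ℕ → V) (μ : ℕ → ℝ) : Prop where
  symm_inner : ∀ f g, B f g = B g f
  symm_energy : ∀ f g, E f g = E g f
  inner_self_nonneg : ∀ f, 0 ≤ B f f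
  energy_self_nonneg : ∀ f, 0 ≤ E f f
  inner_eigenvector_pos : ∀ k, 0 < B (e k) (e k)
  strictMono : StrictMono μ
  energy_eigenvector : ∀ f k, E f (e k) = μ k * B f (e k)

/-- The remainder of `f` after subtracting its orthogonal projection, with respect to `B`, onto
the span of `e 0, …, e (N - 1)`. -/
def remainder (B : LinearMap.BilinForm ℝ V) (e : ℕ → V) (N : ℕ) (f : V) : V :=
  f - ∑ k ∈ Finset.range N, (B f (e k) / B (e k) (e k)) • e k

namespace IsEigensystem

variable {B E : LinearMap.BilinForm ℝ V} {e : ℕ → V} {μ : ℕ → ℝ}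

theorem inner_eigenvector_eq_zero (h : IsEigensystem B E e μ) {j k : ℕ} (hjk : j ≠ k) :
    B (e j) (e k) = 0 := by
  have hE : μ k * B (e j) (e k) = μ j * B (e j) (e k) := by
    rw [← h.energy_eigenvector, h.symm_energy, h.energy_eigenvector, h.symm_inner]
  by_contra hne
  exact hjk (h.strictMono.injective (mul_right_cancel₀ hne hE)).symm

theorem inner_remainder_eigenvector (h : IsEigensystem B E e μ) {N k : ℕ} (hk : k < N) (f : V) :
    B (remainder B e N f) (e k) = 0 := by
  simp only [remainder, map_sub, map_sum, map_smul, LinearMap.sub_apply, LinearMap.sum_apply,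
    LinearMap.smul_apply, smul_eq_mul]
  rw [Finset.sum_eq_single k (fun j _ hj => by simp [h.inner_eigenvector_eq_zero hj])
    (fun hk' => absurd (Finset.mem_range.mpr hk) hk'),
    div_mul_cancel₀ _ (h.inner_eigenvector_pos k).ne', sub_self]

theorem energy_remainder_eigenvector (h : IsEigensystem B E e μ) {N k : ℕ} (hk : k < N) (f : V) :
    E (remainder B e N f) (e k) = 0 := by
  rw [h.energy_eigenvector, h.inner_remainder_eigenvector hk, mul_zero]

theorem inner_remainder_self (h : IsEigensystem B E e μ) (N : ℕ) (f : V) :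
    B (remainder B e N f) (remainder B e N f) =
      B f f - ∑ k ∈ Finset.range N, B f (e k) ^ 2 / B (e k) (e k) := by
  conv_lhs => enter [2]; rw [remainder]
  rw [map_sub, map_sum, Finset.sum_eq_zero fun k hk => by
    rw [map_smul, h.inner_remainder_eigenvector (Finset.mem_range.mp hk), smul_zero], sub_zero,
    h.symm_inner, remainder, map_sub, map_sum]
  congr 1
  refine Finset.sum_congr rfl fun k _ => ?_
  rw [map_smul, smul_eq_mul]
  ring

theorem energy_remainder_self (h : IsEigensystem B E e μ) (N : ℕ) (f : V) :
    E (remainder B e N f) (remainder B e N f) =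
      E f f - ∑ k ∈ Finset.range N, μ k * (B f (e k) ^ 2 / B (e k) (e k)) := by
  conv_lhs => enter [2]; rw [remainder]
  rw [map_sub, map_sum, Finset.sum_eq_zero fun k hk => by
    rw [map_smul, h.energy_remainder_eigenvector (Finset.mem_range.mp hk), smul_zero], sub_zero,
    h.symm_energy, remainder, map_sub, map_sum]
  congr 1
  refine Finset.sum_congr rfl fun k _ => ?_
  rw [map_smul, smul_eq_mul, h.energy_eigenvector]
  ring

theorem sum_energy_le (h : IsEigensystem B E e μ) (N : ℕ) (f : V) :
    ∑ k ∈ Finset.range N, μ k * (B f (e k) ^ 2 / B (e k) (e k)) ≤ E f f := by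
  have := h.energy_self_nonneg (remainder B e N f)
  rwa [h.energy_remainder_self, sub_nonneg] at this

-- If the inequality failed, `E - μ N • B` would be negative definite on the `N + 1`-dimensional
-- span of `e 0, …, e (N - 1)` and the remainder, which meets the kernel of `L` nontrivially.
theorem mul_inner_remainder_le_energy (h : IsEigensystem B E e μ) {κ : Type*} [Fintype κ] {N : ℕ}
    (hcard : Fintype.card κ ≤ N) (L : V →ₗ[ℝ] κ → ℝ)
    (hL : ∀ w, L w = 0 → μ N * B w w ≤ E w w) (f : V) :
    μ N * B (remainder B e N f) (remainder B e N f) ≤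
      E (remainder B e N f) (remainder B e N f) := by
  set r := remainder B e N f
  set A : LinearMap.BilinForm ℝ V := E - μ N • B
  have hA : ∀ w w', A w w' = E w w' - μ N * B w w' := fun w w' => rfl
  have hAr : ∀ k < N, A r (e k) = 0 := fun k hk => by
    rw [hA, h.energy_remainder_eigenvector hk, h.inner_remainder_eigenvector hk, mul_zero, sub_zero]
  have hAsymm : ∀ w w', A w w' = A w' w := fun w w' => by
    rw [hA, hA, h.symm_energy, h.symm_inner]
  by_contra! hlt
  have hle := card_le_card_of_neg_of_ker_nonneg A (b := fun i : Option (Fin N) =>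
    i.elim r fun k => e k) ?_ ?_ L fun w hw => sub_nonneg.mpr (hL w hw)
  · rw [Fintype.card_option, Fintype.card_fin] at hle
    omega
  · rintro (_ | j) (_ | k) hjk
    · exact absurd rfl hjk
    · exact hAr k k.2
    · exact (hAsymm _ _).trans (hAr j j.2)
    · have hne : (j : ℕ) ≠ k := fun hjk' => hjk (congrArg some (Fin.ext hjk'))
      simp only [Option.elim_some, hA, h.energy_eigenvector, h.inner_eigenvector_eq_zero hne,
        mul_zero, sub_zero]
  · rintro (_ | k)
    · exact sub_neg.mpr hlt
    · simp only [Option.elim_some, hA, h.energy_eigenvector, ← sub_mul]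
      exact mul_neg_of_neg_of_pos (sub_neg.mpr (h.strictMono k.2)) (h.inner_eigenvector_pos k)

theorem hasSum_inner_sq (h : IsEigensystem B E e μ) (hμ : Tendsto μ atTop atTop)
    (hgap : ∀ N f, μ N * B (remainder B e N f) (remainder B e N f) ≤
      E (remainder B e N f) (remainder B e N f)) (f : V) :
    HasSum (fun k => B f (e k) ^ 2 / B (e k) (e k)) (B f f) := by
  set s : ℕ → ℝ := fun N => B (remainder B e N f) (remainder B e N f)
  have hμ_nonneg : ∀ k, 0 ≤ μ k := fun k => by
    have := h.energy_self_nonneg (e k)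
    rw [h.energy_eigenvector] at this
    exact nonneg_of_mul_nonneg_left this (h.inner_eigenvector_pos k)
  have hterm : ∀ k, 0 ≤ B f (e k) ^ 2 / B (e k) (e k) := fun k =>
    div_nonneg (sq_nonneg _) (h.inner_eigenvector_pos k).le
  have hrem_le : ∀ᶠ N in atTop, s N ≤ E f f / μ N := by
    filter_upwards [hμ.eventually_gt_atTop 0] with N hN
    rw [le_div_iff₀' hN]
    refine (hgap N f).trans ?_
    rw [h.energy_remainder_self]
    exact sub_le_self _ (Finset.sum_nonneg fun k _ => mul_nonneg (hμ_nonneg k) (hterm k))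
  have hrem : Tendsto s atTop (𝓝 0) :=
    tendsto_of_tendsto_of_tendsto_of_le_of_le' tendsto_const_nhds
      (tendsto_const_nhds.div_atTop hμ) (Eventually.of_forall fun N => h.inner_self_nonneg _)
      hrem_le
  rw [hasSum_iff_tendsto_nat_of_nonneg hterm]
  simpa only [s, h.inner_remainder_self, sub_sub_cancel, sub_zero] using hrem.const_sub (B f f)

theorem hasSum_inner_mul_inner (h : IsEigensystem B E e μ) (hμ : Tendsto μ atTop atTop)
    (hgap : ∀ N f, μ N * B (remainder B e N f) (remainder B e N f) ≤
      E (remainder B e N f) (remainder B e N f)) (f g : V) :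
    HasSum (fun k => B f (e k) * B g (e k) / B (e k) (e k)) (B f g) := by
  have hadd := h.hasSum_inner_sq hμ hgap (f + g)
  have hsub := h.hasSum_inner_sq hμ hgap (f - g)
  have hpolar : (B (f + g) (f + g) - B (f - g) (f - g)) / 4 = B f g := by
    simp only [map_add, map_sub, LinearMap.add_apply, LinearMap.sub_apply, h.symm_inner g f]
    ring
  rw [← hpolar]
  refine ((hadd.sub hsub).div_const 4).congr_fun fun k => ?_
  simp only [map_add, map_sub, LinearMap.add_apply, LinearMap.sub_apply]
  ring

end IsEigensystem

end Eigensystem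

section DecayingAiry

theorem le_of_tendsto_of_hasDerivAt_nonneg {f f' : ℝ → ℝ} {a l : ℝ}
    (hf : ∀ x, a ≤ x → HasDerivAt f (f' x) x) (hf' : ∀ x, a ≤ x → 0 ≤ f' x)
    (hl : Tendsto f atTop (𝓝 l)) : f a ≤ l := by
  have hmono : MonotoneOn f (Ici a) :=
    monotoneOn_of_hasDerivWithinAt_nonneg (convex_Ici a)
      (fun x hx => (hf x hx).continuousAt.continuousWithinAt)
      (fun x hx => (hf x (interior_subset hx)).hasDerivWithinAt)
      (fun x hx => hf' x (interior_subset hx))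
  exact ge_of_tendsto hl ((eventually_ge_atTop a).mono fun x hx => hmono self_mem_Ici hx hx)

theorem isBigO_exp_neg_comp_add_const {f : ℝ → ℝ} (hf : f =O[atTop] fun x => exp (-x)) (s : ℝ) :
    (fun x => f (x + s)) =O[atTop] fun x => exp (-x) := by
  refine (hf.comp_tendsto (tendsto_atTop_add_const_right _ s tendsto_id)).trans ?_
  simp only [Function.comp_def, id, neg_add, exp_add]
  simp only [mul_comm _ (exp (-s))]
  exact (Asymptotics.isBigO_refl _ _).const_mul_left _

/-- `u` is a solution of the Airy equation `u'' = 2xu` that tends to `0` at `+∞` and is positive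
at `0`, that is, a positive multiple of the normalized Airy function, and `v` is its derivative. -/
structure DecayingAiry (u v : ℝ → ℝ) : Prop where
  hasDerivAt : ∀ x, HasDerivAt u (v x) x
  hasDerivAt' : ∀ x, HasDerivAt v (2 * x * u x) x
  tendsto_zero : Tendsto u atTop (𝓝 0)
  pos_zero : 0 < u 0

namespace DecayingAiry

variable {u v : ℝ → ℝ}

theorem continuous (h : DecayingAiry u v) : Continuous u :=
  continuous_iff_continuousAt.mpr fun x => (h.hasDerivAt x).continuousAt

theorem continuous' (h : DecayingAiry u v) : Continuous v :=
  continuous_iff_continuousAt.mpr fun x => (h.hasDerivAt' x).continuousAt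

theorem deriv_ne_zero_of_eq_zero (h : DecayingAiry u v) {x : ℝ} (hx : u x = 0) : v x ≠ 0 :=
  fun hx' => h.pos_zero.ne' <|
    eq_zero_of_hasDerivAt_mul_self (by fun_prop) h.hasDerivAt h.hasDerivAt' hx hx' 0

theorem strictMonoOn_mul (h : DecayingAiry u v) : StrictMonoOn (fun x => u x * v x) (Ici 0) := by
  refine strictMonoOn_of_hasDerivWithinAt_pos (convex_Ici 0)
    (h.continuous.mul h.continuous').continuousOn
    (fun x _ => ((h.hasDerivAt x).mul (h.hasDerivAt' x)).hasDerivWithinAt) fun x hx => ?_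
  rw [interior_Ici] at hx
  have hx : 0 < x := hx
  have hsq : v x * v x + u x * (2 * x * u x) = v x ^ 2 + 2 * x * u x ^ 2 := by ring
  rw [hsq]
  by_cases hu : u x = 0
  · have := h.deriv_ne_zero_of_eq_zero hu
    positivity
  · positivity

theorem mul_neg (h : DecayingAiry u v) {x : ℝ} (hx : 0 ≤ x) : u x * v x < 0 := by
  by_contra! hnonneg
  have hpos : ∀ y, x + 1 ≤ y → 0 < u y * v y := fun y hy =>
    hnonneg.trans_lt (h.strictMonoOn_mul hx (hx.trans (by linarith)) (by linarith))
  have hsq : u (x + 1) * u (x + 1) ≤ 0 :=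
    le_of_tendsto_of_hasDerivAt_nonneg (f := fun y => u y * u y)
      (fun y _ => (h.hasDerivAt y).mul (h.hasDerivAt y)) (fun y hy => by linarith [hpos y hy])
      (by simpa using h.tendsto_zero.mul h.tendsto_zero)
  have hzero : u (x + 1) = 0 := mul_self_eq_zero.mp (hsq.antisymm (mul_self_nonneg _))
  simpa [hzero] using hpos (x + 1) le_rfl

theorem pos (h : DecayingAiry u v) {x : ℝ} (hx : 0 ≤ x) : 0 < u x := by
  by_contra! hle
  obtain ⟨c, hc, hc0⟩ :=
    intermediate_value_Icc' hx h.continuous.continuousOn ⟨hle, h.pos_zero.le⟩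
  simpa [hc0] using h.mul_neg hc.1

theorem deriv_neg (h : DecayingAiry u v) {x : ℝ} (hx : 0 ≤ x) : v x < 0 :=
  neg_of_mul_neg_right (h.mul_neg hx) (h.pos hx).le

theorem monotoneOn_deriv (h : DecayingAiry u v) : MonotoneOn v (Ici 0) :=
  monotoneOn_of_hasDerivWithinAt_nonneg (convex_Ici 0) h.continuous'.continuousOn
    (fun x _ => (h.hasDerivAt' x).hasDerivWithinAt) fun x hx => by
      have hx : 0 ≤ x := interior_subset hx
      have := h.pos hx
      positivity

theorem neg_deriv_le (h : DecayingAiry u v) {x : ℝ} (hx : 1 ≤ x) : -v x ≤ u (x - 1) := by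
  obtain ⟨c, hc, hslope⟩ := exists_hasDerivAt_eq_slope u v (sub_one_lt x)
    h.continuous.continuousOn fun y _ => h.hasDerivAt y
  have hmono : v c ≤ v x := h.monotoneOn_deriv (show 0 ≤ c by linarith [hc.1])
    (show 0 ≤ x by linarith) hc.2.le
  have := h.pos (show 0 ≤ x by linarith)
  rw [sub_sub_cancel, div_one] at hslope
  linarith

theorem tendsto_deriv_zero (h : DecayingAiry u v) : Tendsto v atTop (𝓝 0) := by
  have hshift : Tendsto (fun x => u (x - 1)) atTop (𝓝 0) :=
    h.tendsto_zero.comp (tendsto_atTop_add_const_right _ (-1) tendsto_id)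
  refine tendsto_of_tendsto_of_tendsto_of_le_of_le' (by simpa using hshift.neg)
    tendsto_const_nhds ?_ ?_ <;> filter_upwards [eventually_ge_atTop 1] with x hx
  · linarith [h.neg_deriv_le hx]
  · exact (h.deriv_neg (by linarith)).le

theorem deriv_add_self_nonpos (h : DecayingAiry u v) {x : ℝ} (hx : 1 ≤ x) : v x + u x ≤ 0 := by
  have hderiv : ∀ y, HasDerivAt (fun y => (v y + u y) * exp (-y))
      ((2 * y - 1) * u y * exp (-y)) y := fun y =>
    (((h.hasDerivAt' y).add (h.hasDerivAt y)).mul (hasDerivAt_neg y).exp).congr_deriv (by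
      simp only [Pi.add_apply]
      ring)
  have hlim : Tendsto (fun y => (v y + u y) * exp (-y)) atTop (𝓝 0) := by
    simpa using (h.tendsto_deriv_zero.add h.tendsto_zero).mul tendsto_exp_neg_atTop_nhds_zero
  have hle := le_of_tendsto_of_hasDerivAt_nonneg (a := x) (fun y _ => hderiv y) (fun y hy => by
    have := h.pos (show 0 ≤ y by linarith)
    have : 0 ≤ 2 * y - 1 := by linarith
    positivity) hlim
  exact nonpos_of_mul_nonpos_left hle (exp_pos _)

theorem isBigO (h : DecayingAiry u v) : u =O[atTop] fun x => exp (-x) := by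
  have hanti : AntitoneOn (fun x => u x * exp x) (Ici 1) :=
    antitoneOn_of_hasDerivWithinAt_nonpos (convex_Ici 1)
      (h.continuous.mul continuous_exp).continuousOn
      (fun x _ => ((h.hasDerivAt x).mul (hasDerivAt_exp x)).hasDerivWithinAt) fun x hx => by
        rw [← add_mul]
        exact mul_nonpos_of_nonpos_of_nonneg (h.deriv_add_self_nonpos (interior_subset hx))
          (exp_pos x).le
  refine Asymptotics.IsBigO.of_bound (u 1 * exp 1) ?_
  filter_upwards [eventually_ge_atTop 1] with x hx
  rw [norm_of_nonneg (h.pos (by linarith)).le, norm_of_nonneg (exp_pos _).le, exp_neg,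
    ← div_eq_mul_inv, le_div_iff₀ (exp_pos x)]
  exact hanti self_mem_Ici hx hx

theorem isBigO_deriv (h : DecayingAiry u v) : v =O[atTop] fun x => exp (-x) := by
  refine (Asymptotics.IsBigO.of_bound' ?_).trans (isBigO_exp_neg_comp_add_const h.isBigO (-1))
  filter_upwards [eventually_ge_atTop 1] with x hx
  rw [norm_of_nonpos (h.deriv_neg (by linarith)).le, ← sub_eq_add_neg]
  exact (h.neg_deriv_le hx).trans (le_norm_self _)

theorem tendsto_id_mul_zero (h : DecayingAiry u v) : Tendsto (fun x => x * u x) atTop (𝓝 0) := by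
  rw [← Asymptotics.isLittleO_one_iff ℝ]
  have hid : (fun x : ℝ => x) =o[atTop] exp := by simpa using isLittleO_pow_exp_atTop (n := 1)
  refine (hid.mul_isBigO h.isBigO).congr_right fun x => ?_
  rw [← exp_add, add_neg_cancel, exp_zero]

theorem deriv_add_mul_self_nonneg (h : DecayingAiry u v) {x : ℝ} (hx : 1 ≤ x) :
    0 ≤ v x + 2 * (x * u x) := by
  have hderiv : ∀ y, HasDerivAt (fun y => -((v y + 2 * (y * u y)) * exp (-y ^ 2)))
      (2 * u y * (2 * y + 1) * (y - 1) * exp (-y ^ 2)) y := fun y =>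
    (((h.hasDerivAt' y).add (((hasDerivAt_id y).mul (h.hasDerivAt y)).const_mul 2)).mul
      (((hasDerivAt_id y).pow 2).neg).exp).neg.congr_deriv (by
        simp only [Pi.add_apply, Pi.mul_apply, Pi.neg_apply, Pi.pow_apply, id]
        ring)
  have hgauss : Tendsto (fun y : ℝ => exp (-y ^ 2)) atTop (𝓝 0) :=
    tendsto_exp_neg_atTop_nhds_zero.comp (tendsto_pow_atTop two_ne_zero)
  have hlim : Tendsto (fun y => -((v y + 2 * (y * u y)) * exp (-y ^ 2))) atTop (𝓝 0) := by
    simpa using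
      ((h.tendsto_deriv_zero.add (h.tendsto_id_mul_zero.const_mul 2)).mul hgauss).neg
  have hle := le_of_tendsto_of_hasDerivAt_nonneg (a := x) (fun y _ => hderiv y) (fun y hy => by
    have hy_nonneg : 0 ≤ y := by linarith
    have := h.pos hy_nonneg
    have : 0 ≤ y - 1 := by linarith
    positivity) hlim
  exact nonneg_of_mul_nonneg_left (neg_nonpos.mp hle) (exp_pos _)

theorem isBigO_deriv_div_self (h : DecayingAiry u v) (c : ℝ) :
    (fun x => v (x - c) / u (x - c)) =O[atTop] exp := by
  have hlog : (fun x => v x / u x) =O[atTop] fun x => 2 * x := by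
    refine Asymptotics.IsBigO.of_bound' ?_
    filter_upwards [eventually_ge_atTop 1] with x hx
    have hpos := h.pos (show 0 ≤ x by linarith)
    rw [norm_div, norm_of_nonpos (h.deriv_neg (by linarith)).le, norm_of_nonneg hpos.le,
      norm_of_nonneg (by linarith), div_le_iff₀ hpos]
    linarith [h.deriv_add_mul_self_nonneg hx]
  exact (hlog.comp_tendsto (tendsto_atTop_add_const_right _ (-c) tendsto_id)).trans
    (isBigO_linear_exp c)

theorem contDiff (h : DecayingAiry u v) : ContDiff ℝ 1 u := by
  rw [contDiff_one_iff_deriv]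
  exact ⟨fun x => (h.hasDerivAt x).differentiableAt,
    (deriv_eq h.hasDerivAt).symm ▸ h.continuous'⟩

/-- The translate `x ↦ u (x + s)` as a test function; it solves `f'' = 2(x + s)f`. -/
def translate (h : DecayingAiry u v) (s : ℝ) : expDecay :=
  ⟨fun x => u (x + s), h.contDiff.comp (contDiff_id.add contDiff_const),
    isBigO_exp_neg_comp_add_const h.isBigO s, by
      rw [deriv_eq fun x => (h.hasDerivAt (x + s)).comp_add_const x s]
      exact isBigO_exp_neg_comp_add_const h.isBigO_deriv s⟩

theorem deriv_translate (h : DecayingAiry u v) (s x : ℝ) :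
    deriv (h.translate s).1 x = v (x + s) :=
  ((h.hasDerivAt (x + s)).comp_add_const x s).deriv

open expDecay

theorem energy_translate (h : DecayingAiry u v) (f : expDecay) (s : ℝ) :
    energy (-s) f (h.translate s) = -(f.1 0 * v s) := by
  have hderiv : ∀ x, HasDerivAt (fun x => f.1 x * v (x + s))
      (deriv f.1 x * deriv (h.translate s).1 x +
        2 * (x - -s) * (f.1 x * (h.translate s).1 x)) x := fun x =>
    ((expDecay.hasDerivAt f x).mul ((h.hasDerivAt' (x + s)).comp_add_const x s)).congr_deriv (by
      rw [deriv_translate, translate]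
      ring)
  have hlim : Tendsto (fun x => f.1 x * v (x + s)) atTop (𝓝 0) := by
    simpa using (tendsto_zero_of_isBigO_exp_neg f.2.2.1).mul
      (tendsto_zero_of_isBigO_exp_neg (isBigO_exp_neg_comp_add_const h.isBigO_deriv s))
  simpa [energy] using integral_Ioi_of_hasDerivAt_of_tendsto' (a := 0) (fun x _ => hderiv x)
    (integrableOn_energy f (h.translate s) (-s)) hlim

theorem energy_zero_translate (h : DecayingAiry u v) (f : expDecay) (s : ℝ) :
    energy 0 f (h.translate s) = -(2 * s * l2 f (h.translate s)) - f.1 0 * v s := by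
  rw [energy_eq_energy_sub f _ 0 (-s), h.energy_translate]
  ring

theorem sub_mul_l2_translate (h : DecayingAiry u v) (s t : ℝ) :
    2 * (s - t) * l2 (h.translate s) (h.translate t) = u s * v t - u t * v s := by
  have hst := h.energy_zero_translate (h.translate s) t
  have hts := h.energy_zero_translate (h.translate t) s
  rw [energy_comm, hts, l2_comm] at hst
  simp only [translate, zero_add] at hst ⊢
  linarith

theorem l2_translate_self (h : DecayingAiry u v) (s : ℝ) :
    l2 (h.translate s) (h.translate s) = v s ^ 2 / 2 - s * u s ^ 2 := by
  have hderiv : ∀ x, HasDerivAt (fun x => (x + s) * u (x + s) ^ 2 - v (x + s) ^ 2 / 2)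
      ((h.translate s).1 x * (h.translate s).1 x) x := fun x => by
    have hu := (h.hasDerivAt (x + s)).comp_add_const x s
    have hv := (h.hasDerivAt' (x + s)).comp_add_const x s
    refine ((((hasDerivAt_id x).add_const s).mul (hu.pow 2)).sub
      ((hv.pow 2).div_const 2)).congr_deriv ?_
    simp only [translate, id, Pi.pow_apply]
    ring
  have hlim : Tendsto (fun x => (x + s) * u (x + s) ^ 2 - v (x + s) ^ 2 / 2) atTop (𝓝 0) := by
    have : Tendsto (fun x => x * u x * u x - v x ^ 2 / 2) atTop (𝓝 0) := by
      simpa using (h.tendsto_id_mul_zero.mul h.tendsto_zero).sub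
        ((h.tendsto_deriv_zero.pow 2).div_const 2)
    refine (this.comp (tendsto_atTop_add_const_right _ s tendsto_id)).congr fun x => ?_
    simp only [Function.comp_apply, id]
    ring
  simpa [l2] using integral_Ioi_of_hasDerivAt_of_tendsto' (a := 0) (fun x _ => hderiv x)
    (integrableOn_mul (h.translate s) (h.translate s)) hlim

theorem sq_div_deriv_le (h : DecayingAiry u v) {z : ℝ} (hz : 0 < z) :
    (u z / v z) ^ 2 ≤ 1 / (2 * z) := by
  have hl2 := l2_self_nonneg (h.translate z)
  have hv := (h.deriv_neg hz.le).ne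
  rw [h.l2_translate_self] at hl2
  rw [div_pow, div_le_div_iff₀ (by positivity) (by positivity)]
  linarith

theorem tendsto_div_deriv_zero (h : DecayingAiry u v) :
    Tendsto (fun z => u z / v z) atTop (𝓝 0) := by
  have hbound : Tendsto (fun z : ℝ => √(1 / (2 * z))) atTop (𝓝 0) := by
    rw [← sqrt_zero]
    exact (tendsto_const_nhds.div_atTop (tendsto_id.const_mul_atTop two_pos)).sqrt
  exact squeeze_zero_norm'
    ((eventually_gt_atTop 0).mono fun z hz => abs_le_sqrt (h.sq_div_deriv_le hz)) hbound

end DecayingAiry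

end DecayingAiry

section TraceFormulas

/-- `δ` is the increasing enumeration of the zeros of `x ↦ v (-x)` on `(0, ∞)`. -/
structure IsNegZeroEnum (v : ℝ → ℝ) (δ : ℕ → ℝ) : Prop where
  pos : ∀ k, 0 < δ k
  strictMono : StrictMono δ
  apply_neg : ∀ k, v (-δ k) = 0
  exists_eq : ∀ x, 0 < x → v (-x) = 0 → ∃ k, δ k = x

namespace IsNegZeroEnum

open expDecay

variable {u v : ℝ → ℝ} {δ : ℕ → ℝ}

theorem apply_neg_ne_zero (hδ : IsNegZeroEnum v δ) (h : DecayingAiry u v) (k : ℕ) :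
    u (-δ k) ≠ 0 :=
  fun hu => h.deriv_ne_zero_of_eq_zero hu (hδ.apply_neg k)

theorem deriv_ne_zero_of_neg_zero_lt (hδ : IsNegZeroEnum v δ) (h : DecayingAiry u v) {y : ℝ}
    (hy : -δ 0 < y) : v y ≠ 0 := by
  intro hvy
  have hy_neg : y < 0 := not_le.mp fun hy0 => (h.deriv_neg hy0).ne hvy
  obtain ⟨k, hk⟩ := hδ.exists_eq (-y) (neg_pos.mpr hy_neg) (by rwa [neg_neg])
  linarith [hδ.strictMono.monotone k.zero_le]

theorem deriv_ne_zero_of_mem_Ioo (hδ : IsNegZeroEnum v δ) {N : ℕ} {y : ℝ}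
    (hy : y ∈ Ioo (-δ (N + 1)) (-δ N)) : v y ≠ 0 := by
  intro hvy
  obtain ⟨k, hk⟩ := hδ.exists_eq (-y) (by linarith [hδ.pos N, hy.2]) (by rwa [neg_neg])
  have hNk : N < k := hδ.strictMono.lt_iff_lt.mp (by linarith [hy.2])
  have hkN : k < N + 1 := hδ.strictMono.lt_iff_lt.mp (by linarith [hy.1])
  omega

theorem ne_zero_of_neg_zero_lt (hδ : IsNegZeroEnum v δ) (h : DecayingAiry u v) {y : ℝ}
    (hy : -δ 0 < y) : u y ≠ 0 := by
  intro huy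
  have hy_neg : y < 0 := not_le.mp fun hy0 => (h.pos hy0).ne' huy
  obtain ⟨c, hc, hslope⟩ := exists_hasDerivAt_eq_slope u v hy_neg h.continuous.continuousOn
    fun x _ => h.hasDerivAt x
  have hvc : 0 ≤ v c := by
    rw [hslope, huy]
    exact div_nonneg (by linarith [h.pos_zero]) (by linarith)
  obtain ⟨d, hd, hvd⟩ := intermediate_value_Icc' hc.2.le h.continuous'.continuousOn
    ⟨(h.deriv_neg le_rfl).le, hvc⟩
  exact hδ.deriv_ne_zero_of_neg_zero_lt h (hy.trans (hc.1.trans_le hd.1)) hvd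

theorem exists_finset_zeros (hδ : IsNegZeroEnum v δ) (h : DecayingAiry u v) (N : ℕ) :
    ∃ s : Finset ℝ, s.card ≤ N ∧ ∀ y, -δ N < y → u y = 0 → y ∈ s := by
  induction N with
  | zero => exact ⟨∅, le_rfl, fun y hy huy => absurd huy (hδ.ne_zero_of_neg_zero_lt h hy)⟩
  | succ N ih =>
    obtain ⟨s, hcard, hs⟩ := ih
    have hsub : ({y ∈ Ioo (-δ (N + 1)) (-δ N) | u y = 0}).Subsingleton := by
      rintro y ⟨hy, huy⟩ z ⟨hz, huz⟩
      by_contra hne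
      wlog hyz : y < z generalizing y z
      · exact this hz huz hy huy (Ne.symm hne) (lt_of_le_of_ne (not_lt.mp hyz) (Ne.symm hne))
      obtain ⟨c, hc, hvc⟩ := exists_hasDerivAt_eq_zero hyz h.continuous.continuousOn
        (huy.trans huz.symm) fun x _ => h.hasDerivAt x
      exact hδ.deriv_ne_zero_of_mem_Ioo ⟨hy.1.trans hc.1, hc.2.trans hz.2⟩ hvc
    obtain ⟨a, ha⟩ : ∃ a, {y ∈ Ioo (-δ (N + 1)) (-δ N) | u y = 0} ⊆ {a} := by
      rcases hsub.eq_empty_or_singleton with hempty | ⟨a, ha⟩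
      · exact ⟨0, hempty ▸ empty_subset _⟩
      · exact ⟨a, ha.subset⟩
    refine ⟨insert a s, (Finset.card_insert_le a s).trans (by omega), fun y hy huy => ?_⟩
    rcases lt_trichotomy y (-δ N) with hlt | heq | hgt
    · exact Finset.mem_insert.mpr (Or.inl (ha ⟨⟨hy, hlt⟩, huy⟩))
    · exact absurd (heq ▸ huy) (hδ.apply_neg_ne_zero h N)
    · exact Finset.mem_insert_of_mem (hs y hgt huy)

theorem l2_translate_self (hδ : IsNegZeroEnum v δ) (h : DecayingAiry u v) (k : ℕ) :
    l2 (h.translate (-δ k)) (h.translate (-δ k)) = δ k * u (-δ k) ^ 2 := by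
  rw [h.l2_translate_self, hδ.apply_neg]
  ring

theorem l2_translate_translate (hδ : IsNegZeroEnum v δ) (h : DecayingAiry u v) {s : ℝ}
    (hs : 0 ≤ s) (k : ℕ) :
    l2 (h.translate s) (h.translate (-δ k)) = -(u (-δ k) * v s) / (2 * (s + δ k)) := by
  have := hδ.pos k
  have hmul := h.sub_mul_l2_translate s (-δ k)
  rw [hδ.apply_neg, mul_zero, zero_sub, sub_neg_eq_add] at hmul
  rw [eq_div_iff (by positivity), mul_comm, hmul]

theorem isEigensystem (hδ : IsNegZeroEnum v δ) (h : DecayingAiry u v) :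
    IsEigensystem l2 (energy 0) (fun k => h.translate (-δ k)) (fun k => 2 * δ k) where
  symm_inner := l2_comm
  symm_energy f g := energy_comm f g 0
  inner_self_nonneg := l2_self_nonneg
  energy_self_nonneg := energy_zero_self_nonneg
  inner_eigenvector_pos k := by
    have := hδ.pos k
    have := hδ.apply_neg_ne_zero h k
    rw [hδ.l2_translate_self]
    positivity
  strictMono := hδ.strictMono.const_mul two_pos
  energy_eigenvector f k := by
    rw [h.energy_zero_translate, hδ.apply_neg]
    ring

theorem mul_l2_le_energy_of_zeros (hδ : IsNegZeroEnum v δ) (h : DecayingAiry u v) {N : ℕ}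
    {w : expDecay} (hw : ∀ y, -δ N < y → u y = 0 → w.1 (y + δ N) = 0) :
    2 * δ N * l2 w w ≤ energy 0 w w := by
  have henergy : 0 ≤ energy (δ N) w w := by
    refine energy_self_nonneg_of_zeros w (fun x => (h.hasDerivAt (x - δ N)).comp_sub_const x _)
      (fun x => (h.hasDerivAt' (x - δ N)).comp_sub_const x _)
      (by rw [zero_sub, hδ.apply_neg]) (h.isBigO_deriv_div_self _)
      fun x hx hux => ⟨?_, h.deriv_ne_zero_of_eq_zero hux⟩
    have hx_ne : x ≠ 0 := by
      rintro rfl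
      exact hδ.apply_neg_ne_zero h N (by rwa [zero_sub] at hux)
    have hx_pos : 0 < x := lt_of_le_of_ne hx hx_ne.symm
    simpa using hw (x - δ N) (by linarith) hux
  rwa [energy_eq_energy_sub w w _ 0, sub_zero, sub_nonneg] at henergy

theorem mul_l2_remainder_le_energy (hδ : IsNegZeroEnum v δ) (h : DecayingAiry u v) (N : ℕ)
    (f : expDecay) :
    2 * δ N * l2 (remainder l2 (fun k => h.translate (-δ k)) N f)
        (remainder l2 (fun k => h.translate (-δ k)) N f) ≤
      energy 0 (remainder l2 (fun k => h.translate (-δ k)) N f)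
        (remainder l2 (fun k => h.translate (-δ k)) N f) := by
  obtain ⟨s, hcard, hs⟩ := hδ.exists_finset_zeros h N
  refine (hδ.isEigensystem h).mul_inner_remainder_le_energy (κ := s) (by simpa using hcard)
    (LinearMap.pi fun y => LinearMap.proj (y + δ N) ∘ₗ expDecay.subtype) (fun w hw => ?_) f
  exact hδ.mul_l2_le_energy_of_zeros h fun y hy huy => congrFun hw ⟨y, hs y hy huy⟩

theorem sum_inv_sq_le (hδ : IsNegZeroEnum v δ) (h : DecayingAiry u v) (N : ℕ) :
    ∑ k ∈ Finset.range N, (δ k ^ 2)⁻¹ ≤ -2 * u 0 / v 0 := by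
  have hv : v 0 < 0 := h.deriv_neg le_rfl
  have hbessel := (hδ.isEigensystem h).sum_energy_le N (h.translate 0)
  have hterm : ∀ k, 2 * δ k * (l2 (h.translate 0) (h.translate (-δ k)) ^ 2 /
      l2 (h.translate (-δ k)) (h.translate (-δ k))) = v 0 ^ 2 / 2 * (δ k ^ 2)⁻¹ := fun k => by
    have := (hδ.pos k).ne'
    have := hδ.apply_neg_ne_zero h k
    rw [hδ.l2_translate_translate h le_rfl, hδ.l2_translate_self h, zero_add]
    field_simp
  simp only [hterm, ← Finset.mul_sum, h.energy_zero_translate] at hbessel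
  rw [le_div_iff_of_neg hv]
  simp only [DecayingAiry.translate, zero_add] at hbessel
  have := hv.ne
  nlinarith

theorem summable_inv_sq (hδ : IsNegZeroEnum v δ) (h : DecayingAiry u v) :
    Summable fun k => (δ k ^ 2)⁻¹ :=
  summable_of_sum_range_le (fun k => by positivity) (hδ.sum_inv_sq_le h)

theorem tendsto_atTop (hδ : IsNegZeroEnum v δ) (h : DecayingAiry u v) :
    Tendsto δ atTop atTop := by
  have hinv : Tendsto (fun k => δ k ^ 2) atTop atTop := by
    refine (tendsto_inv_nhdsGT_zero.comp (tendsto_nhdsWithin_iff.mpr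
      ⟨(hδ.summable_inv_sq h).tendsto_atTop_zero, ?_⟩)).congr fun k => inv_inv _
    exact Eventually.of_forall fun k => inv_pos.mpr (pow_pos (hδ.pos k) 2)
  exact (tendsto_sqrt_atTop.comp hinv).congr fun k => sqrt_sq (hδ.pos k).le

theorem hasSum_inv_mul_mul (hδ : IsNegZeroEnum v δ) (h : DecayingAiry u v) {s t : ℝ}
    (hs : 0 ≤ s) (ht : 0 ≤ t) :
    HasSum (fun k => (δ k * ((s + δ k) * (t + δ k)))⁻¹)
      (4 * l2 (h.translate s) (h.translate t) / (v s * v t)) := by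
  have hparseval := (hδ.isEigensystem h).hasSum_inner_mul_inner
    ((hδ.tendsto_atTop h).const_mul_atTop two_pos) (hδ.mul_l2_remainder_le_energy h)
    (h.translate s) (h.translate t)
  have hvs := (h.deriv_neg hs).ne
  have hvt := (h.deriv_neg ht).ne
  refine ((hparseval.mul_left 4).div_const (v s * v t)).congr_fun fun k => ?_
  have := hδ.pos k
  have := hδ.apply_neg_ne_zero h k
  rw [hδ.l2_translate_translate h hs, hδ.l2_translate_translate h ht, hδ.l2_translate_self h]
  field_simp
  ring

theorem hasSum_inv_mul_sq (hδ : IsNegZeroEnum v δ) (h : DecayingAiry u v) {z : ℝ} (hz : 0 ≤ z) :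
    HasSum (fun k => (δ k * (z + δ k) ^ 2)⁻¹) (2 - 4 * z * (u z / v z) ^ 2) := by
  have hv := (h.deriv_neg hz).ne
  convert hδ.hasSum_inv_mul_mul h hz hz using 1
  · simp only [sq]
  · rw [h.l2_translate_self]
    field_simp
    ring

theorem hasSum_inv_sq_mul (hδ : IsNegZeroEnum v δ) (h : DecayingAiry u v) {z : ℝ} (hz : 0 < z) :
    HasSum (fun k => (δ k ^ 2 * (z + δ k))⁻¹) (2 / z * (u z / v z - u 0 / v 0)) := by
  have hv := (h.deriv_neg hz.le).ne
  have hv0 := (h.deriv_neg le_rfl).ne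
  have hl2 := h.sub_mul_l2_translate 0 z
  convert hδ.hasSum_inv_mul_mul h le_rfl hz.le using 1
  · simp only [zero_add, sq, mul_assoc]
  · field_simp
    linarith

theorem hasSum_inv_cube (hδ : IsNegZeroEnum v δ) (h : DecayingAiry u v) :
    HasSum (fun k => (δ k ^ 3)⁻¹) 2 := by
  simpa [← pow_succ'] using hδ.hasSum_inv_mul_sq h le_rfl

theorem hasSum_inv_sq (hδ : IsNegZeroEnum v δ) (h : DecayingAiry u v) :
    HasSum (fun k => (δ k ^ 2)⁻¹) (-2 * u 0 / v 0) := by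
  have hsummable := hδ.summable_inv_sq h
  refine hsummable.hasSum_iff.mpr (le_antisymm ?_ ?_)
  · exact hsummable.tsum_le_of_sum_range_le (hδ.sum_inv_sq_le h)
  have hle : ∀ z, 0 < z → 2 * (u z / v z - u 0 / v 0) ≤ ∑' k, (δ k ^ 2)⁻¹ := by
    intro z hz
    have hsum := (hδ.hasSum_inv_sq_mul h hz).mul_left z
    rw [← mul_assoc, mul_div_cancel₀ _ hz.ne'] at hsum
    refine hasSum_le (fun k => ?_) hsum hsummable.hasSum
    have := hδ.pos k
    rw [mul_inv, mul_left_comm, ← div_eq_mul_inv]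
    exact mul_le_of_le_one_right (by positivity) ((div_le_one (by positivity)).mpr (by linarith))
  have hlim := (h.tendsto_div_deriv_zero.sub_const (u 0 / v 0)).const_mul 2
  have hvalue : 2 * (0 - u 0 / v 0) = -2 * u 0 / v 0 := by ring
  exact hvalue ▸ le_of_tendsto hlim ((eventually_gt_atTop 0).mono hle)

-- The summand is `((δ k ^ 3)⁻¹ - (δ k * (z + δ k) ^ 2)⁻¹) / z`.
theorem hasSum_two_mul_add_div (hδ : IsNegZeroEnum v δ) (h : DecayingAiry u v) {z : ℝ}
    (hz : 0 < z) :
    HasSum (fun k => (2 * δ k + z) / (δ k ^ 3 * (z + δ k) ^ 2)) (4 * (u z / v z) ^ 2) := by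
  have hdiff := ((hδ.hasSum_inv_cube h).sub (hδ.hasSum_inv_mul_sq h hz.le)).div_const z
  rw [sub_sub_cancel, mul_right_comm, mul_div_cancel_right₀ _ hz.ne'] at hdiff
  refine hdiff.congr_fun fun k => ?_
  have := hδ.pos k
  field_simp
  ring

theorem summable_inv_pow_four (hδ : IsNegZeroEnum v δ) (h : DecayingAiry u v) :
    Summable fun k => (δ k ^ 4)⁻¹ := by
  refine ((hδ.hasSum_inv_cube h).summable.mul_left (δ 0)⁻¹).of_nonneg_of_le
    (fun k => by have := hδ.pos k; positivity) fun k => ?_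
  have := hδ.pos 0
  have := hδ.pos k
  rw [pow_succ', mul_inv]
  gcongr
  exact hδ.strictMono.monotone k.zero_le

theorem tendsto_tsum_two_mul_add_div (hδ : IsNegZeroEnum v δ) (h : DecayingAiry u v) :
    Tendsto (fun z => ∑' k, (2 * δ k + z) / (δ k ^ 3 * (z + δ k) ^ 2)) (𝓝[>] 0)
      (𝓝 (2 * ∑' k, (δ k ^ 4)⁻¹)) := by
  have hterm : ∀ k, Tendsto (fun z => (2 * δ k + z) / (δ k ^ 3 * (z + δ k) ^ 2)) (𝓝[>] 0)
      (𝓝 (2 * (δ k ^ 4)⁻¹)) := fun k => by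
    have := (hδ.pos k).ne'
    have hcont : ContinuousAt (fun z => (2 * δ k + z) / (δ k ^ 3 * (z + δ k) ^ 2)) 0 :=
      ContinuousAt.div (by fun_prop) (by fun_prop) (by simpa using this)
    convert hcont.tendsto.mono_left nhdsWithin_le_nhds using 2
    rw [zero_add, add_zero]
    field_simp
  have hbound : ∀ᶠ z in 𝓝[>] (0 : ℝ), ∀ k,
      ‖(2 * δ k + z) / (δ k ^ 3 * (z + δ k) ^ 2)‖ ≤ 2 * (δ k ^ 4)⁻¹ := by
    filter_upwards [self_mem_nhdsWithin] with z hz k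
    have hz : 0 < z := hz
    have := hδ.pos k
    rw [norm_of_nonneg (by positivity), ← div_eq_mul_inv, div_le_div_iff₀ (by positivity)
      (by positivity)]
    have : 0 ≤ δ k ^ 3 * z * (2 * z + 3 * δ k) := by positivity
    linarith
  rw [← tsum_mul_left]
  exact tendsto_tsum_of_dominated_convergence ((hδ.summable_inv_pow_four h).mul_left 2) hterm hbound

theorem hasSum_inv_pow_four (hδ : IsNegZeroEnum v δ) (h : DecayingAiry u v) :
    HasSum (fun k => (δ k ^ 4)⁻¹) (2 * u 0 ^ 2 / v 0 ^ 2) := by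
  have hlim : Tendsto (fun z => 4 * (u z / v z) ^ 2) (𝓝[>] 0) (𝓝 (2 * ∑' k, (δ k ^ 4)⁻¹)) :=
    (hδ.tendsto_tsum_two_mul_add_div h).congr'
      (eventually_mem_nhdsWithin.mono fun z hz => (hδ.hasSum_two_mul_add_div h hz).tsum_eq)
  have hcont : Tendsto (fun z => 4 * (u z / v z) ^ 2) (𝓝[>] 0) (𝓝 (4 * (u 0 / v 0) ^ 2)) :=
    (((h.continuous.continuousAt.div h.continuous'.continuousAt (h.deriv_neg le_rfl).ne).pow
      2).const_mul 4).tendsto.mono_left nhdsWithin_le_nhds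
  refine (hδ.summable_inv_pow_four h).hasSum_iff.mpr ?_
  have hvalue := tendsto_nhds_unique hlim hcont
  rw [div_pow] at hvalue
  linear_combination hvalue / 2

end IsNegZeroEnum

end TraceFormulas

/-- trace formulas for the zeros `δ k` (here `δ k` stands for `δ'_{k+1}`)
of the derivative of the normalized Airy function:
`∑ δₖ⁻² = -2/u'(0)`, `∑ δₖ⁻³ = 2`, `∑ δₖ⁻⁴ = 2/u'(0)²`, and the weights
`pₖ = (u'(0)²/2)·δₖ⁻⁴` sum to `1`. -/
theorem stmt11
    (u : ℝ → ℝ) (hu_smooth : ContDiff ℝ 2 u)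
    (hu_ode : ∀ h : ℝ, deriv (deriv u) h = 2 * h * u h)
    (hu_zero : u 0 = 1)
    (hu'_zero : deriv u 0 = -((6:ℝ) ^ ((1:ℝ)/3) * Real.Gamma (2/3) / Real.Gamma (1/3)))
    (hu_pos : ∀ h : ℝ, 0 ≤ h → 0 < u h)
    (hu_anti : StrictAntiOn u (Ici 0))
    (hu_lim : Tendsto u atTop (𝓝 0))
    (δ : ℕ → ℝ) (hδ_pos : ∀ k, 0 < δ k) (hδ_mono : StrictMono δ)
    (hδ_zero : ∀ k, deriv u (-(δ k)) = 0)
    (hδ_all : ∀ x : ℝ, 0 < x → deriv u (-x) = 0 → ∃ k, δ k = x) :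
    (∑' k : ℕ, ((δ k) ^ 2)⁻¹) = -2 / deriv u 0 ∧
    (∑' k : ℕ, ((δ k) ^ 3)⁻¹) = 2 ∧
    (∑' k : ℕ, ((δ k) ^ 4)⁻¹) = 2 / (deriv u 0) ^ 2 ∧
    (∑' k : ℕ, (deriv u 0) ^ 2 / 2 * ((δ k) ^ 4)⁻¹) = 1 := by
  have hu : Differentiable ℝ u := hu_smooth.differentiable two_ne_zero
  have hu' : Differentiable ℝ (deriv u) :=
    (contDiff_succ_iff_deriv (n := 1).mp hu_smooth).2.2.differentiable one_ne_zero
  have hAiry : DecayingAiry u (deriv u) :=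
    ⟨fun x => (hu x).hasDerivAt, fun x => hu_ode x ▸ (hu' x).hasDerivAt, hu_lim,
      hu_zero ▸ one_pos⟩
  have hδ : IsNegZeroEnum (deriv u) δ := ⟨hδ_pos, hδ_mono, hδ_zero, hδ_all⟩
  have h2 := hδ.hasSum_inv_sq hAiry
  have h4 := hδ.hasSum_inv_pow_four hAiry
  rw [hu_zero, mul_one] at h2
  rw [hu_zero, one_pow, mul_one] at h4
  have hweights : deriv u 0 ^ 2 / 2 * (2 / deriv u 0 ^ 2) = 1 := by
    have := (hAiry.deriv_neg le_rfl).ne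
    field_simp
  exact ⟨h2.tsum_eq, (hδ.hasSum_inv_cube hAiry).tsum_eq, h4.tsum_eq,
    (hweights ▸ h4.mul_left (deriv u 0 ^ 2 / 2)).tsum_eq⟩
end
end
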